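/- arXiv:1611.09279 — 11 statements merged into one kernel-verified Lean document; each statement's English description precedes it below -/
import Mathlib

section
/- If P and Q are partial orders on {1,…,n}, each a canonically labeled unit interval order, and P and Q are order-isomorphic, then P and Q have the same antiadjacency matrix; equivalently, for all i, j ∈ {1,…,n}: i <_P j if and only if i <_Q j. -/
open Classical in
/-- The altitude of `i`: `|{j : j ≤_P i}| - |{j : i ≤_P j}|`. -/
noncomputable def altitude {n : ℕ} (P : PartialOrder (Fin n)) (i : Fin n) : ℤ :=
  ((Finset.univ.filter (fun j : Fin n => P.le j i)).card : ℤ) -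
    ((Finset.univ.filter (fun j : Fin n => P.le i j)).card : ℤ)

/-- `P` is canonically labeled if `α(i) < α(j)` implies `i < j` as integers. -/
def IsCanonicallyLabeled {n : ℕ} (P : PartialOrder (Fin n)) : Prop :=
  ∀ i j : Fin n, altitude P i < altitude P j → i < j

open Classical in
theorem altitude_eq_strict {n : ℕ} (P : PartialOrder (Fin n)) (i : Fin n) :
    altitude P i = ((Finset.univ.filter (fun j : Fin n => P.lt j i)).card : ℤ) -
      ((Finset.univ.filter (fun j : Fin n => P.lt i j)).card : ℤ) := by
  have h1 : (Finset.univ.filter (fun j : Fin n => P.le j i)) =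
      insert i (Finset.univ.filter (fun j : Fin n => P.lt j i)) := by
    ext j
    simp only [Finset.mem_filter, Finset.mem_univ, true_and, Finset.mem_insert]
    exact (@le_iff_eq_or_lt _ P j i)
  have h2 : (Finset.univ.filter (fun j : Fin n => P.le i j)) =
      insert i (Finset.univ.filter (fun j : Fin n => P.lt i j)) := by
    ext j
    simp only [Finset.mem_filter, Finset.mem_univ, true_and, Finset.mem_insert]
    rw [eq_comm]
    exact (@le_iff_eq_or_lt _ P i j)
  have h3 : ¬ P.lt i i := @lt_irrefl _ P.toPreorder i
  unfold altitude
  rw [h1, h2, Finset.card_insert_of_notMem (by simpa using h3),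
    Finset.card_insert_of_notMem (by simpa using h3)]
  push_cast
  ring

open Classical in
theorem same_of_altitude_eq {n : ℕ} (P : PartialOrder (Fin n)) (q : Fin n → ℝ)
    (hq : ∀ i j : Fin n, P.lt i j ↔ q i + 1 < q j) (i j : Fin n) (hij : q i ≤ q j)
    (h : altitude P i = altitude P j) (k : Fin n) :
    (P.lt k i ↔ P.lt k j) ∧ (P.lt i k ↔ P.lt j k) := by
  rw [altitude_eq_strict, altitude_eq_strict] at h
  have s1 : (Finset.univ.filter (fun k : Fin n => P.lt k i)) ⊆
      (Finset.univ.filter (fun k : Fin n => P.lt k j)) := by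
    intro k
    simp only [Finset.mem_filter, Finset.mem_univ, true_and, hq]
    intro h; linarith
  have s2 : (Finset.univ.filter (fun k : Fin n => P.lt j k)) ⊆
      (Finset.univ.filter (fun k : Fin n => P.lt i k)) := by
    intro k
    simp only [Finset.mem_filter, Finset.mem_univ, true_and, hq]
    intro h; linarith
  have c1 := Finset.card_le_card s1
  have c2 := Finset.card_le_card s2
  have e1 := Finset.eq_of_subset_of_card_le s1 (by omega)
  have e2 := Finset.eq_of_subset_of_card_le s2 (by omega)
  have m1 := Finset.ext_iff.1 e1 k
  have m2 := Finset.ext_iff.1 e2 k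
  simp only [Finset.mem_filter, Finset.mem_univ, true_and] at m1 m2
  exact ⟨m1, m2.symm⟩

theorem same_of_altitude_eq2 {n : ℕ} (P : PartialOrder (Fin n))
    (hP : ∃ q : Fin n → ℝ, ∀ i j : Fin n, P.lt i j ↔ q i + 1 < q j) (i j : Fin n)
    (h : altitude P i = altitude P j) (k : Fin n) :
    (P.lt k i ↔ P.lt k j) ∧ (P.lt i k ↔ P.lt j k) := by
  obtain ⟨q, hq⟩ := hP
  rcases le_total (q i) (q j) with hij | hij
  · exact same_of_altitude_eq P q hq i j hij h k
  · have := same_of_altitude_eq P q hq j i hij h.symm k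
    exact ⟨this.1.symm, this.2.symm⟩

theorem mono_of_reflect {n : ℕ} (a : Fin n → ℤ) (h : ∀ i j : Fin n, a i < a j → i < j) :
    Monotone a := by
  intro i j hij
  by_contra hc
  exact absurd (h j i (not_le.1 hc)) (not_lt.2 hij)

theorem eq_of_reflect {n : ℕ} (a b : Fin n → ℤ) (ha : ∀ i j : Fin n, a i < a j → i < j)
    (hb : ∀ i j : Fin n, b i < b j → i < j) (f : Fin n → Fin n) (hf : Function.Bijective f)
    (h : ∀ i, b (f i) = a i) (i : Fin n) : b (f i) = b i := by
  let σ : Equiv.Perm (Fin n) := Equiv.ofBijective f hf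
  have hc : b ∘ σ = a := funext h
  have he : b ∘ σ = b ∘ (Equiv.refl (Fin n)) :=
    Tuple.unique_monotone (by rw [hc]; exact mono_of_reflect a ha) (mono_of_reflect b hb)
  exact congrFun he i

/-- Two order-isomorphic canonically labeled unit interval orders on `{1,…,n}` have the same
antiadjacency matrix, i.e. the same strict order relation. -/
theorem eq_of_canonical_iso
    {n : ℕ} (P Q : PartialOrder (Fin n))
    (hP : ∃ q : Fin n → ℝ, ∀ i j : Fin n, P.lt i j ↔ q i + 1 < q j)
    (hQ : ∃ q : Fin n → ℝ, ∀ i j : Fin n, Q.lt i j ↔ q i + 1 < q j)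
    (hPc : IsCanonicallyLabeled P) (hQc : IsCanonicallyLabeled Q)
    (hiso : ∃ f : Fin n → Fin n, Function.Bijective f ∧
      ∀ i j : Fin n, P.le i j ↔ Q.le (f i) (f j)) :
    ∀ i j : Fin n, P.lt i j ↔ Q.lt i j := by
  obtain ⟨f, hf, hle⟩ := hiso
  have hlt : ∀ i j, P.lt i j ↔ Q.lt (f i) (f j) := by
    intro i j
    rw [P.lt_iff_le_not_ge, Q.lt_iff_le_not_ge]
    exact and_congr (hle i j) (not_congr (hle j i))
  have halt : ∀ i, altitude Q (f i) = altitude P i := by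
    intro i
    unfold altitude
    congr 2
    · symm
      refine Finset.card_bijective f hf ?_
      intro k
      simpa using hle k i
    · symm
      refine Finset.card_bijective f hf ?_
      intro k
      simpa using hle i k
  have he' : ∀ i, altitude Q (f i) = altitude Q i :=
    eq_of_reflect _ _ hPc hQc f hf halt
  intro i j
  rw [hlt, (same_of_altitude_eq2 Q hQ _ _ (he' i) (f j)).2,
    (same_of_altitude_eq2 Q hQ _ _ (he' j) i).1]
end

section
/- For every n × n Dyck matrix A, the relation i <_A j defined by a_{i,j} = 0 is a strict partial order on {1,…,n} which makes {1,…,n} a unit interval order whose antiadjacency matrix is A. Moreover, every partial order on {1,…,n} that is a unit interval order is order-isomorphic to the order <_A determined by exactly one n × n Dyck matrix A; hence isomorphism classes of unit interval orders of cardinality n are in bijection with n × n Dyck matrices. -/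
/-- A 0/1 matrix is a Dyck matrix: ones on and below the diagonal, and the zero entries form a
right-justified Young diagram anchored at the upper-right corner. -/
def IsDyckMatrix {n : ℕ} (A : Matrix (Fin n) (Fin n) ℝ) : Prop :=
  (∀ i j : Fin n, A i j = 0 ∨ A i j = 1) ∧
  (∀ i j : Fin n, (j : ℕ) ≤ (i : ℕ) → A i j = 1) ∧
  (∀ i j i' j' : Fin n, A i j = 0 → (i' : ℕ) ≤ (i : ℕ) → (j : ℕ) ≤ (j' : ℕ) → A i' j' = 0)

theorem aux_q (Z : ℕ → ℕ → Prop) (h1 : ∀ i j, Z i j → i < j)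
    (h2 : ∀ i j i' j', Z i j → i' ≤ i → j ≤ j' → Z i' j') (m : ℕ) :
    ∃ q : ℕ → ℝ, ∀ i j, i < m → j < m →
      (i < j → q i < q j) ∧ (Z i j → q i + 1 < q j) ∧ (¬ Z i j → q j < q i + 1) := by
  classical
  induction m with
  | zero => exact ⟨fun _ => 0, fun i j hi => absurd hi (Nat.not_lt_zero _)⟩
  | succ m ih =>
    obtain ⟨q, hq⟩ := ih
    obtain ⟨c, hc1, hc2⟩ := Order.exists_between_finsets
      ((Finset.range m).image q ∪ ((Finset.range m).filter (fun i => Z i m)).image (fun i => q i + 1))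
      (((Finset.range m).filter (fun i => ¬ Z i m)).image (fun i => q i + 1)) (by
        intro x hx y hy
        simp only [Finset.mem_union, Finset.mem_image, Finset.mem_range, Finset.mem_filter] at hx hy
        obtain ⟨k, ⟨hk, hkZ⟩, rfl⟩ := hy
        rcases hx with ⟨i, hi, rfl⟩ | ⟨i, ⟨hi, hiZ⟩, rfl⟩
        · exact (hq k i hk hi).2.2 (fun h => hkZ (h2 _ _ _ _ h le_rfl hi.le))
        · have : i < k := by
            by_contra hik
            exact hkZ (h2 _ _ _ _ hiZ (not_lt.1 hik) le_rfl)
          linarith [(hq i k hi hk).1 this])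
    simp only [Finset.mem_union, Finset.mem_image, Finset.mem_range, Finset.mem_filter] at hc1 hc2
    have a1 : ∀ i, i < m → q i < c := fun i hi => hc1 _ (Or.inl ⟨i, hi, rfl⟩)
    have a2 : ∀ i, i < m → Z i m → q i + 1 < c := fun i hi hz => hc1 _ (Or.inr ⟨i, ⟨hi, hz⟩, rfl⟩)
    have a3 : ∀ i, i < m → ¬ Z i m → c < q i + 1 := fun i hi hz => hc2 _ ⟨i, ⟨hi, hz⟩, rfl⟩
    refine ⟨fun i => if i = m then c else q i, fun i j hi hj => ?_⟩
    rcases Nat.lt_succ_iff_lt_or_eq.1 hi with hi | rfl <;>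
    rcases Nat.lt_succ_iff_lt_or_eq.1 hj with hj | rfl
    · simpa [hi.ne, hj.ne] using hq i j hi hj
    · simpa [hi.ne] using ⟨fun _ => a1 i hi, a2 i hi, a3 i hi⟩
    · have : ¬ Z i j := fun h => by have := h1 _ _ h; omega
      simp only [if_true, hj.ne, if_false]
      exact ⟨fun h => by omega, fun h => absurd h this, fun _ => by linarith [a1 j hj]⟩
    · have : ¬ Z j j := fun h => by have := h1 _ _ h; omega
      simp [this]

theorem aux_dyck_q {n : ℕ} (A : Matrix (Fin n) (Fin n) ℝ) (hA : IsDyckMatrix A) :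
    ∃ q : Fin n → ℝ, ∀ i j : Fin n, A i j = 0 ↔ q i + 1 < q j := by
  obtain ⟨h0, h1, h2⟩ := hA
  obtain ⟨q, hq⟩ := aux_q (fun i j => ∃ a b : Fin n, A a b = 0 ∧ i ≤ (a : ℕ) ∧ (b : ℕ) ≤ j)
    (by
      rintro i j ⟨a, b, hab, hi, hj⟩
      by_contra hij
      have := h1 a b (by omega)
      rw [hab] at this
      exact zero_ne_one this)
    (by
      rintro i j i' j' ⟨a, b, hab, hi, hj⟩ hi' hj'
      exact ⟨a, b, hab, hi'.trans hi, hj.trans hj'⟩) n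
  refine ⟨fun i => q i, fun i j => ⟨fun h => ?_, fun h => ?_⟩⟩
  · exact (hq i j i.2 j.2).2.1 ⟨i, j, h, le_rfl, le_rfl⟩
  · by_contra hij
    have := (hq i j i.2 j.2).2.2 (by
      rintro ⟨a, b, hab, hi, hj⟩
      exact hij (h2 _ _ _ _ hab hi hj))
    exact absurd h (not_lt.2 this.le)

open Classical in
noncomputable def auxOnes {n : ℕ} (A : Matrix (Fin n) (Fin n) ℝ) (i : Fin n) : ℕ :=
  (Finset.univ.filter (fun j => ¬ A i j = 0)).card

theorem auxOnes_mono {n : ℕ} (A : Matrix (Fin n) (Fin n) ℝ) (hA : IsDyckMatrix A) :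
    Monotone (auxOnes A) := by
  classical
  intro i i' h
  unfold auxOnes
  apply Finset.card_le_card
  intro j hj
  simp only [Finset.mem_filter, Finset.mem_univ, true_and] at hj ⊢
  exact fun h' => hj (hA.2.2 _ _ _ _ h' h le_rfl)

theorem auxOnes_iff {n : ℕ} (A : Matrix (Fin n) (Fin n) ℝ) (hA : IsDyckMatrix A) (i j : Fin n) :
    ¬ A i j = 0 ↔ (j : ℕ) < auxOnes A i := by
  classical
  unfold auxOnes
  constructor
  · intro h
    have : Finset.Iic j ⊆ Finset.univ.filter (fun j => ¬ A i j = 0) := by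
      intro k hk
      simp only [Finset.mem_filter, Finset.mem_univ, true_and, Finset.mem_Iic] at hk ⊢
      exact fun h' => h (hA.2.2 _ _ _ _ h' le_rfl hk)
    have := Finset.card_le_card this
    rw [Fin.card_Iic] at this
    omega
  · intro h hz
    have : Finset.univ.filter (fun j => ¬ A i j = 0) ⊆ Finset.Iio j := by
      intro k hk
      simp only [Finset.mem_filter, Finset.mem_univ, true_and, Finset.mem_Iio] at hk ⊢
      by_contra hjk
      exact hk (hA.2.2 _ _ _ _ hz le_rfl (not_lt.1 hjk))
    have := Finset.card_le_card this
    rw [Fin.card_Iio] at this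
    omega

theorem aux_unique {n : ℕ} (A B : Matrix (Fin n) (Fin n) ℝ) (hA : IsDyckMatrix A)
    (hB : IsDyckMatrix B) (g : Equiv.Perm (Fin n))
    (hg : ∀ i j, A i j = 0 ↔ B (g i) (g j) = 0) : A = B := by
  classical
  have e : auxOnes A = auxOnes B ∘ g := by
    funext i
    unfold auxOnes
    refine Finset.card_bij (fun j _ => g j) ?_ ?_ ?_
    · intro j hj
      simpa [← hg] using hj
    · intro a _ b _ h
      exact g.injective h
    · intro b hb
      refine ⟨g.symm b, ?_, by simp⟩
      simpa [hg] using hb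
  have e2 : auxOnes B ∘ g = auxOnes B ∘ (1 : Equiv.Perm (Fin n)) :=
    Tuple.unique_monotone (e ▸ auxOnes_mono A hA) (auxOnes_mono B hB)
  have e3 : auxOnes A = auxOnes B := e.trans e2
  ext i j
  have : ¬ A i j = 0 ↔ ¬ B i j = 0 := by
    rw [auxOnes_iff A hA, auxOnes_iff B hB, e3]
  clear e e2 e3 hg
  rcases hA.1 i j with h | h <;> rcases hB.1 i j with h' | h' <;> simp_all

open Classical in
/-- Every Dyck matrix determines (via its zero entries) a strict partial order on `{1,…,n}` which
is a unit interval order with antiadjacency matrix `A`; and every unit interval order on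
`{1,…,n}` is order-isomorphic to the order of exactly one Dyck matrix. -/
theorem dyckMatrix_orders_and_unique_representative (n : ℕ) :
    (∀ A : Matrix (Fin n) (Fin n) ℝ, IsDyckMatrix A →
      (∀ i : Fin n, ¬ A i i = 0) ∧
      (∀ i j k : Fin n, A i j = 0 → A j k = 0 → A i k = 0) ∧
      (∃ q : Fin n → ℝ, ∀ i j : Fin n, A i j = 0 ↔ q i + 1 < q j) ∧
      (Matrix.of fun i j : Fin n => if A i j = 0 then (0 : ℝ) else 1) = A) ∧
    (∀ P : PartialOrder (Fin n),
      (∃ q : Fin n → ℝ, ∀ i j : Fin n, P.lt i j ↔ q i + 1 < q j) →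
      ∃! A : Matrix (Fin n) (Fin n) ℝ, IsDyckMatrix A ∧
        ∃ f : Fin n → Fin n, Function.Bijective f ∧
          ∀ i j : Fin n, P.lt i j ↔ A (f i) (f j) = 0) := by
  refine ⟨fun A hA => ⟨fun i h => ?_, fun i j k hij hjk => ?_, aux_dyck_q A hA, ?_⟩, ?_⟩
  · have := hA.2.1 i i le_rfl
    rw [h] at this
    exact zero_ne_one this
  · refine hA.2.2 i j i k hij le_rfl ?_
    by_contra hkj
    have := hA.2.1 j k (by omega)
    rw [hjk] at this
    exact zero_ne_one this
  · ext i j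
    rcases hA.1 i j with h | h <;> simp [h]
  · rintro P ⟨q, hq⟩
    have hm := Tuple.monotone_sort q
    set s := Tuple.sort q with hs
    refine ⟨fun a b => if q (s a) + 1 < q (s b) then 0 else 1,
      ⟨⟨fun i j => ?_, fun i j h => ?_, fun i j i' j' h hi hj => ?_⟩,
        s.symm, s.symm.bijective, fun i j => ?_⟩, ?_⟩
    · by_cases h : q (s i) + 1 < q (s j) <;> simp [h]
    · have h' : q (s j) ≤ q (s i) := hm h
      exact if_neg (by linarith)
    · have h1 : q (s i') ≤ q (s i) := hm hi
      have h2 : q (s j) ≤ q (s j') := hm hj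
      have h3 : q (s i) + 1 < q (s j) := by
        by_contra h3
        simp [h3] at h
      exact if_pos (by linarith)
    · rw [hq]
      simp
    · rintro B ⟨hB, f, hf, hfB⟩
      refine (aux_unique _ B ⟨fun i j => ?_, fun i j h => ?_, fun i j i' j' h hi hj => ?_⟩ hB
        (s.trans (Equiv.ofBijective f hf)) fun i j => ?_).symm
      · by_cases h : q (s i) + 1 < q (s j) <;> simp [h]
      · have h' : q (s j) ≤ q (s i) := hm h
        exact if_neg (by linarith)
      · have h1 : q (s i') ≤ q (s i) := hm hi
        have h2 : q (s j) ≤ q (s j') := hm hj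
        have h3 : q (s i) + 1 < q (s j) := by
          by_contra h3
          simp [h3] at h
        exact if_pos (by linarith)
      · have := hfB (s i) (s j)
        rw [hq] at this
        simp [← this]
end

section
/- Let A be an n × n Dyck matrix regarded as a matrix with real entries. Then A is totally nonnegative: for every k ≥ 1 and all strictly increasing maps f, g : {1,…,k} → {1,…,n}, the determinant of the k × k submatrix (a_{f(s), g(t)})_{1 ≤ s,t ≤ k} is nonnegative. -/
theorem staircase_det_nonneg : ∀ (k : ℕ) (B : Matrix (Fin k) (Fin k) ℝ),
    (∀ i j, B i j = 0 ∨ B i j = 1) →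
    (∀ i j i' j', B i j = 0 → i' ≤ i → j ≤ j' → B i' j' = 0) → 0 ≤ B.det := by
  intro k
  induction k with
  | zero => intro B _ _; simp
  | succ k ih =>
    intro B h01 hz
    have hcol : ∀ j, B 0 j = 1 → ∀ i, B i j = 1 := by
      intro j hj i
      rcases h01 i j with h | h
      · have := hz i j 0 j h (Fin.zero_le _) le_rfl
        rw [hj] at this
        norm_num at this
      · exact h
    rcases h01 0 0 with h0 | h0
    · rw [Matrix.det_eq_zero_of_row_eq_zero 0
        (fun j => hz 0 0 0 j h0 le_rfl (Fin.zero_le _))]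
    · by_cases hj : ∃ j, j ≠ 0 ∧ B 0 j = 1
      · obtain ⟨j, hj0, hj1⟩ := hj
        rw [Matrix.det_zero_of_column_eq hj0
          (fun i => by rw [hcol j hj1 i, hcol 0 h0 i])]
      · push Not at hj
        rw [Matrix.det_succ_row_zero, Fin.sum_univ_succ, Finset.sum_eq_zero]
        · simp only [h0, Fin.val_zero, pow_zero, one_mul, add_zero]
          apply ih
          · intro i j
            exact h01 _ _
          · intro i j i' j' h hi hj
            refine hz _ _ _ _ h ?_ ?_
            · exact Fin.succ_le_succ_iff.mpr hi
            · simpa using hj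
        · intro j _
          rcases h01 0 j.succ with h | h
          · rw [h]; ring
          · exact absurd h (hj _ (Fin.succ_ne_zero j))

/-- Every Dyck matrix, regarded as a real matrix, is totally nonnegative: every minor on
strictly increasing row and column index sets is nonnegative. -/
theorem dyckMatrix_totally_nonnegative
    {n : ℕ} (A : Matrix (Fin n) (Fin n) ℝ) (hA : IsDyckMatrix A) :
    ∀ (k : ℕ), 1 ≤ k → ∀ f g : Fin k → Fin n, StrictMono f → StrictMono g →
      0 ≤ (A.submatrix f g).det := by
  intro k _ f g hf hg
  obtain ⟨h1, _, h3⟩ := hA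
  refine staircase_det_nonneg k _ (fun i j => h1 _ _) ?_
  intro i j i' j' h hi hj
  exact h3 _ _ _ _ h (hf.monotone hi) (hg.monotone hj)
end

section
/- Let A = (a_{i,j}) be an n × n real matrix and B = ψ(A). For all subsets I, J of {1,…,n} with |I| = |J|, let K = { n+1−k : k ∈ {1,…,n} \ I } ∪ { n+j : j ∈ J }, an n-element subset of {1,…,2n}. Then Δ_{I,J}(A) = Δ_{{1,…,n},K}(B), i.e., the minor of A on row set I and column set J (rows and columns listed in increasing order) equals the determinant of the n × n submatrix of B on column set K (columns listed in increasing order). -/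
/-- Postnikov's map `ψ`: the `n × 2n` matrix whose first `n` columns form the identity and whose
entry in row `i`, column `n + j` (1-based) is `(-1)^(n-i) * a_{n+1-i, j}`.  Here rows and columns
are 0-based: row `i` and column `c` correspond to 1-based indices `i+1` and `c+1`. -/
noncomputable def psiMat {n : ℕ} (A : Matrix (Fin n) (Fin n) ℝ) :
    Matrix (Fin n) (Fin (2 * n)) ℝ :=
  Matrix.of fun i c =>
    if hc : (c : ℕ) < n then (if (i : ℕ) = (c : ℕ) then 1 else 0)
    else (-1 : ℝ) ^ (n - 1 - (i : ℕ)) *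
      A ⟨n - 1 - (i : ℕ), by have := i.isLt; omega⟩ ⟨(c : ℕ) - n, by have := c.isLt; omega⟩

/-- The column set `K = {n+1-k : k ∈ [n] \ I} ∪ {n+j : j ∈ J}` of `{1,…,2n}`, written with
0-based indices: `k ∈ [n] \ I` (0-based `x`) contributes `n-1-x` and `j ∈ J` (0-based `x`)
contributes `n+x`. -/
def KSet {n : ℕ} (I J : Finset (Fin n)) : Finset (Fin (2 * n)) :=
  (Iᶜ.image fun x : Fin n =>
      (⟨n - 1 - (x : ℕ), by have := x.isLt; omega⟩ : Fin (2 * n))) ∪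
  (J.image fun x : Fin n => (⟨n + (x : ℕ), by have := x.isLt; omega⟩ : Fin (2 * n)))

theorem psi_det_aux : ∀ (n m k : ℕ), m + k = n → ∀ (A : ℕ → ℕ → ℝ) (f g : ℕ → ℕ),
    (∀ i j, i < j → j < k → f i < f j) → (∀ i, i < k → f i < n) →
    (∀ i j, i < j → j < m → g j < g i) → (∀ i, i < m → g i < n) →
    (∀ i j, i < k → j < m → f i ≠ g j) →
    (Matrix.of fun i j : Fin k => A (f i) j).det =
    (Matrix.of fun i c : Fin n => if (c : ℕ) < m then (if n - 1 - (i : ℕ) = g c then (1 : ℝ) else 0)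
      else (-1 : ℝ) ^ (n - 1 - (i : ℕ)) * A (n - 1 - (i : ℕ)) ((c : ℕ) - m)).det := by
  intro n
  induction n with
  | zero =>
    intro m k h A f g _ _ _ _ _
    obtain ⟨rfl, rfl⟩ : m = 0 ∧ k = 0 := by omega
    simp
  | succ n ih =>
    intro m k h A f g hf hfn hg hgn hfg
    by_cases hc : 0 < m ∧ g 0 = n
    · obtain ⟨hm, hg0⟩ := hc
      obtain ⟨m, rfl⟩ : ∃ m', m = m' + 1 := ⟨m - 1, by omega⟩
      rw [Matrix.det_succ_column_zero, Finset.sum_eq_single 0]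
      · rw [ih m k (by omega) A f (fun i => g (i + 1)) hf ?_ ?_ ?_ ?_]
        · simp only [Matrix.of_apply, Fin.val_zero, hg0]
          simp only [Nat.add_sub_cancel, Nat.sub_zero, if_pos hm, if_true, pow_zero, one_mul]
          congr 1
          ext i c
          have e : n - (i.1 + 1) = n - 1 - i.1 := by omega
          simp [Matrix.submatrix_apply, e]
        · intro i hi
          have := hfn i hi
          have := hfg i 0 hi hm
          omega
        · intro i j hij hj
          exact hg _ _ (by omega) (by omega)
        · intro i hi
          have := hg 0 (i + 1) (by omega) (by omega)
          omega
        · intro i j hi hj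
          exact hfg i (j + 1) hi (by omega)
      · intro b _ hb
        have hb' : (b : ℕ) ≠ 0 := fun h => hb (Fin.ext h)
        have : ¬ (n + 1 - 1 - (b : ℕ) = g 0) := by omega
        simp [hg0]
        omega
      · simp
    · have hgn' : ∀ i, i < m → g i < n := by
        intro i hi
        have h1 := hgn i hi
        have h0 : g 0 ≠ n := fun h => hc ⟨by omega, h⟩
        have h2 := hgn 0 (by omega)
        rcases Nat.eq_zero_or_pos i with rfl | hp
        · omega
        · have := hg 0 i hp hi
          omega
      have hk : 0 < k ∧ f (k - 1) = n := by
        by_contra hcon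
        have hfn' : ∀ i, i < k → f i < n := by
          intro i hi
          have h1 := hfn i hi
          have h0 : f (k - 1) ≠ n := fun h => hcon ⟨by omega, h⟩
          have h2 := hfn (k - 1) (by omega)
          rcases Nat.lt_or_ge i (k - 1) with hp | hp
          · have := hf i (k - 1) hp (by omega)
            omega
          · have : i = k - 1 := by omega
            subst this
            omega
        let F : Fin m ⊕ Fin k → Fin n := Sum.elim (fun i => ⟨g i, hgn' i i.2⟩)
          (fun i => ⟨f i, hfn' i i.2⟩)
        have hF : Function.Injective F := by
          rintro (a | a) (b | b) hab <;> simp only [F, Sum.elim_inl, Sum.elim_inr, Fin.mk.injEq] at hab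
          · rcases lt_trichotomy a.1 b.1 with h | h | h
            · have := hg _ _ h b.2
              omega
            · rw [Fin.ext h]
            · have := hg _ _ h a.2
              omega
          · exact absurd hab.symm (hfg _ _ b.2 a.2)
          · exact absurd hab (hfg _ _ a.2 b.2)
          · rcases lt_trichotomy a.1 b.1 with h | h | h
            · have := hf _ _ h b.2
              omega
            · rw [Fin.ext h]
            · have := hf _ _ h a.2
              omega
        have := Fintype.card_le_of_injective F hF
        simp at this
        omega
      obtain ⟨hk0, hfk⟩ := hk
      obtain ⟨k, rfl⟩ : ∃ k', k = k' + 1 := ⟨k - 1, by omega⟩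
      obtain rfl : n = m + k := by omega
      simp only [Nat.add_sub_cancel] at hfk
      rw [Matrix.det_succ_row _ (Fin.last k), Matrix.det_succ_row_zero]
      refine Eq.trans ?_ (Fin.sum_univ_add (a := m) (b := k + 1) _).symm
      rw [Finset.sum_eq_zero (s := Finset.univ (α := Fin m)), zero_add]
      · refine Finset.sum_congr rfl fun j _ => ?_
        have key := ih m k rfl (fun r t => A r (if t < j.1 then t else t + 1)) f g
          (fun a b hab hb => hf a b hab (by omega)) ?_ hg hgn'
          (fun a b ha hb => hfg a b (by omega) hb)
        · have e1 : ((Matrix.of fun i j : Fin (k+1) => A (f i) j).submatrix (Fin.last k).succAbove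
              j.succAbove) = (Matrix.of fun a b : Fin k => A (f a) (if b.1 < j.1 then b.1 else b.1 + 1)) := by
            ext a b
            simp only [Matrix.submatrix_apply, Matrix.of_apply, Fin.succAbove_last, Fin.val_castSucc]
            congr 1
            simp only [Fin.succAbove, Fin.lt_def, Fin.val_castSucc]
            split_ifs <;> simp
          rw [e1, key]
          have e2 : ((-1 : ℝ)) ^ (k + j.1) = (-1) ^ (m + j.1) * (-1) ^ (m + k) := by
            rw [← pow_add, show m + j.1 + (m + k) = 2 * m + (k + j.1) by ring, pow_add _ (2 * m), pow_mul]
            simp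
          have e3 : ¬ (m + j.1 < m) := by omega
          simp only [Matrix.of_apply, Fin.val_last, hfk, Fin.val_natAdd, Fin.val_zero, e3, if_false,
            Nat.add_sub_cancel, Nat.sub_zero, Nat.add_sub_cancel_left, e2]
          rw [← mul_assoc ((-1 : ℝ) ^ (m + j.1))]
          congr 1
          congr 1
          ext a c
          have e4 : m + k - (a.1 + 1) = m + k - 1 - a.1 := by omega
          simp only [Matrix.submatrix_apply, Matrix.of_apply, Fin.val_succ, e4]
          have e5 : (Fin.succAbove (n := m + k) (Fin.natAdd m j) c).1 = if c.1 < m + j.1 then c.1 else c.1 + 1 := by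
            simp only [Fin.succAbove, Fin.lt_def, Fin.val_castSucc, Fin.val_natAdd]
            split_ifs <;> simp
          rw [e5]
          by_cases h1 : c.1 < m
          · have h2 : c.1 < m + j.1 := by omega
            simp [h1, h2]
          · by_cases h2 : c.1 < m + j.1
            · have h3 : c.1 - m < j.1 := by omega
              simp [h1, h2, h3]
            · have h3 : ¬ (c.1 - m < j.1) := by omega
              have h4 : ¬ (c.1 + 1 < m) := by omega
              have h5 : c.1 + 1 - m = c.1 - m + 1 := by omega
              simp [h1, h2, h3, h4, h5]
        · intro i hi
          have := hf i k hi (by omega)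
          omega
      · intro c _
        have := hgn' c c.2
        have h' : m + k ≠ g c := by omega
        simp [h']

/-- Lemma 3.9 of Postnikov: for `B = ψ(A)`, the minor `Δ_{I,J}(A)` equals the maximal minor
`Δ_{[n],K}(B)` where `K = {n+1-k : k ∉ I} ∪ {n+j : j ∈ J}`. -/
theorem minor_eq_psi_maximal_minor
    {n : ℕ} (A : Matrix (Fin n) (Fin n) ℝ) (k : ℕ) (I J : Finset (Fin n))
    (hI : I.card = k) (hJ : J.card = k) :
    ∃ hK : (KSet I J).card = n,
      (A.submatrix (fun t => (I.orderIsoOfFin hI t : Fin n))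
          (fun t => (J.orderIsoOfFin hJ t : Fin n))).det =
      ((psiMat A).submatrix id
          (fun t => ((KSet I J).orderIsoOfFin hK t : Fin (2 * n)))).det := by
  have hK : (KSet I J).card = n := by
    unfold KSet
    rw [Finset.card_union_of_disjoint, Finset.card_image_of_injective,
      Finset.card_image_of_injective, Finset.card_compl, Fintype.card_fin]
    · have := Finset.card_le_univ I
      simp at this
      omega
    · intro a b h
      simp at h
      omega
    · intro a b h
      simp at h
      omega
    · rw [Finset.disjoint_left]
      intro x hx hx'
      simp only [Finset.mem_image] at hx hx'
      obtain ⟨a, _, rfl⟩ := hx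
      obtain ⟨b, _, hb⟩ := hx'
      simp at hb
      omega
  refine ⟨hK, ?_⟩
  have hkn : k ≤ n := by
    have := Finset.card_le_univ I
    simp at this
    omega
  obtain ⟨m, hmk⟩ : ∃ m, m + k = n := ⟨n - k, by omega⟩
  have hIc : Iᶜ.card = m := by
    rw [Finset.card_compl, Fintype.card_fin]
    omega
  let f : ℕ → ℕ := fun t => if h : t < k then (I.orderEmbOfFin hI ⟨t, h⟩ : Fin n) else 0
  let g : ℕ → ℕ := fun t => if h : t < m then (Iᶜ.orderEmbOfFin hIc (Fin.rev ⟨t, h⟩) : Fin n) else 0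
  let A' : ℕ → ℕ → ℝ := fun r c => if h : r < n ∧ c < k then
    A ⟨r, h.1⟩ (J.orderEmbOfFin hJ ⟨c, h.2⟩) else 0
  have key := psi_det_aux n m k hmk A' f g ?_ ?_ ?_ ?_ ?_
  · let h : Fin n → Fin (2 * n) := fun t => if ht : t.1 < m then
        ⟨n - 1 - (Iᶜ.orderEmbOfFin hIc (Fin.rev ⟨t, ht⟩) : Fin n).1, by omega⟩
      else ⟨n + (J.orderEmbOfFin hJ ⟨t.1 - m, by omega⟩ : Fin n).1, by omega⟩
    have hh : h = (KSet I J).orderEmbOfFin hK := by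
      apply Finset.orderEmbOfFin_unique
      · intro x
        unfold KSet
        rw [Finset.mem_union, Finset.mem_image, Finset.mem_image]
        by_cases hx : x.1 < m
        · left
          exact ⟨_, Finset.orderEmbOfFin_mem _ hIc (Fin.rev ⟨x, hx⟩), by simp only [h, dif_pos hx]⟩
        · right
          exact ⟨_, Finset.orderEmbOfFin_mem _ hJ ⟨x.1 - m, by omega⟩, by simp only [h, dif_neg hx]⟩
      · intro a b hab
        have hab' : a.1 < b.1 := hab
        by_cases hb : b.1 < m
        · have ha : a.1 < m := by omega
          have : Iᶜ.orderEmbOfFin hIc (Fin.rev ⟨b, hb⟩) < Iᶜ.orderEmbOfFin hIc (Fin.rev ⟨a, ha⟩) := by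
            rw [OrderEmbedding.lt_iff_lt, Fin.rev_lt_rev]
            exact hab'
          simp only [h, dif_pos ha, dif_pos hb, Fin.lt_def] at this ⊢
          omega
        · by_cases ha : a.1 < m
          · simp only [h, dif_pos ha, dif_neg hb, Fin.lt_def]
            omega
          · have : J.orderEmbOfFin hJ ⟨a.1 - m, by omega⟩ < J.orderEmbOfFin hJ ⟨b.1 - m, by omega⟩ := by
              rw [OrderEmbedding.lt_iff_lt, Fin.lt_def]
              simp only
              omega
            simp only [h, dif_neg ha, dif_neg hb, Fin.lt_def] at this ⊢
            omega
    refine Eq.trans ?_ (key.trans ?_)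
    · congr 1
      ext i j
      simp [A', f]
    · congr 1
      ext i c
      simp only [Matrix.submatrix_apply, Finset.coe_orderIsoOfFin_apply, ← hh, id]
      by_cases hc : c.1 < m
      · have hlt := (Iᶜ.orderEmbOfFin hIc (Fin.rev ⟨c, hc⟩)).2
        have h1 : n - 1 - (Iᶜ.orderEmbOfFin hIc (Fin.rev ⟨c, hc⟩) : Fin n).1 < n := by omega
        simp only [psiMat, Matrix.of_apply, h, dif_pos hc, if_pos hc, g, dif_pos h1]
        congr 1
        apply propext
        omega
      · have h1 : ∀ x : ℕ, ¬ (n + x < n) := by omega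
        have h2 : n - 1 - i.1 < n ∧ c.1 - m < k := by omega
        simp only [psiMat, Matrix.of_apply, h, dif_neg hc, if_neg hc, dif_neg (h1 _), A', dif_pos h2,
          Nat.add_sub_cancel_left]
  · intro i j hij hj
    have hi : i < k := by omega
    simp only [f, dif_pos hi, dif_pos hj]
    rw [← Fin.lt_def, OrderEmbedding.lt_iff_lt]
    exact hij
  · intro i hi
    simp only [f, dif_pos hi]
    exact Fin.isLt _
  · intro i j hij hj
    have hi : i < m := by omega
    simp only [g, dif_pos hi, dif_pos hj]
    rw [← Fin.lt_def, OrderEmbedding.lt_iff_lt, Fin.rev_lt_rev]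
    exact hij
  · intro i hi
    simp only [g, dif_pos hi]
    exact Fin.isLt _
  · intro i j hi hj he
    simp only [f, g, dif_pos hi, dif_pos hj] at he
    have a1 := Finset.orderEmbOfFin_mem I hI ⟨i, hi⟩
    have a2 := Finset.orderEmbOfFin_mem Iᶜ hIc (Fin.rev ⟨j, hj⟩)
    rw [← Fin.ext he] at a2
    exact (Finset.mem_compl.mp a2) a1
end

section
/- Let A be an n × n Dyck matrix regarded as a real matrix and B = ψ(A). Then B has rank n, and every maximal minor of B is nonnegative: for every n-element subset K of {1,…,2n}, the determinant of the n × n submatrix of B on column set K (columns listed in increasing order) is nonnegative. -/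
theorem staircase_det_nonneg_s7 : ∀ (k : ℕ) (N : Matrix (Fin k) (Fin k) ℝ)
    (_ : ∀ i t, N i t = 0 ∨ N i t = 1)
    (_ : ∀ i t i' t', N i t = 0 → i' ≤ i → t ≤ t' → N i' t' = 0), 0 ≤ N.det := by
  intro k
  induction k with
  | zero => intro N _ _; simp
  | succ k ih =>
    intro N h01 hst
    by_cases h : ∀ j : Fin k, N 0 j.succ = 0
    · rw [Matrix.det_succ_row_zero, Fin.sum_univ_succ]
      have h1 : ∑ x : Fin k, (-1 : ℝ) ^ (x.succ : ℕ) * N 0 x.succ *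
          (N.submatrix Fin.succ x.succ.succAbove).det = 0 :=
        Finset.sum_eq_zero fun x _ => by rw [h x]; ring
      rw [h1]
      have h2 : 0 ≤ (N.submatrix Fin.succ (Fin.succAbove 0)).det := by
        apply ih
        · intro i t; exact h01 _ _
        · intro i t i' t' h0 hi ht
          simp only [Matrix.submatrix_apply, Fin.succAbove_zero] at h0 ⊢
          exact hst _ _ _ _ h0 (Fin.succ_le_succ_iff.2 hi) (Fin.succ_le_succ_iff.2 ht)
      have h3 : 0 ≤ N 0 0 := by rcases h01 0 0 with h | h <;> rw [h] <;> norm_num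
      simpa using mul_nonneg h3 h2
    · push Not at h
      obtain ⟨j, hj⟩ := h
      have h1 : ∀ i, N i j.succ = 1 := fun i =>
        (h01 i j.succ).resolve_left fun h0 => hj (hst _ _ _ _ h0 (Fin.zero_le _) le_rfl)
      have h2 : ∀ i, N i 0 = 1 := fun i =>
        (h01 i 0).resolve_left fun h0 => hj (hst _ _ _ _ h0 (Fin.zero_le _) (Fin.zero_le _))
      rw [Matrix.det_zero_of_column_eq (i := 0) (j := j.succ) (Fin.succ_ne_zero j).symm
        (fun i => by rw [h1, h2])]

theorem mixed_det_nonneg : ∀ (k : ℕ) (N : Matrix (Fin k) (Fin k) ℝ)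
    (e : Fin k → Prop) (p : Fin k → ℕ)
    (_ : ∀ t t', t ≤ t' → e t' → e t)
    (_ : ∀ t t', t < t' → e t' → p t' < p t)
    (_ : ∀ t, e t → p t < k)
    (_ : ∀ i t, e t → N i t = if (i : ℕ) = p t then (-1) ^ (i : ℕ) else 0)
    (_ : ∀ i t, ¬ e t → N i t = 0 ∨ N i t = 1)
    (_ : ∀ i t i' t', ¬ e t → N i t = 0 → i' ≤ i → t ≤ t' → N i' t' = 0), 0 ≤ N.det := by
  intro k
  induction k with
  | zero => intros; simp
  | succ k ih =>
    intro N e p hdown hp hpk hid h01 hst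
    by_cases h0 : e 0
    · have hp0 := hpk 0 h0
      rw [Matrix.det_succ_column_zero, Finset.sum_eq_single (⟨p 0, hp0⟩ : Fin (k+1))]
      · rw [hid _ _ h0, if_pos rfl, ← mul_pow]
        simp only [mul_neg, mul_one, neg_neg, one_pow, one_mul]
        have hlt : ∀ t : Fin k, e t.succ → p t.succ < p 0 := fun t ht =>
          hp _ _ (Fin.succ_pos t) ht
        apply ih _ (fun t => e t.succ) (fun t => p t.succ)
        · intro t t' h; exact hdown _ _ (Fin.succ_le_succ_iff.2 h)
        · intro t t' h; exact hp _ _ (Fin.succ_lt_succ_iff.2 h)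
        · intro t ht
          have := hlt t ht
          omega
        · intro i t ht
          rw [Matrix.submatrix_apply, hid _ _ ht]
          have := hlt t ht
          by_cases hi : (i : ℕ) < p 0
          · rw [Fin.succAbove_of_castSucc_lt _ _ (by simpa [Fin.lt_def] using hi)]
            simp
          · rw [Fin.succAbove_of_le_castSucc _ _ (by simpa [Fin.le_def] using hi)]
            rw [if_neg, if_neg]
            · omega
            · simp only [Fin.val_succ]; omega
        · intro i t ht; exact h01 _ _ ht
        · intro i t i' t' he h hi ht
          exact hst _ _ _ _ he h ((Fin.strictMono_succAbove _).monotone hi)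
            (Fin.succ_le_succ_iff.2 ht)
      · intro b _ hb
        rw [hid _ _ h0, if_neg]
        · ring
        · intro h; exact hb (Fin.ext h)
      · intro h; exact absurd (Finset.mem_univ _) h
    · have hne : ∀ t, ¬ e t := fun t ht => h0 (hdown _ _ (Fin.zero_le _) ht)
      exact staircase_det_nonneg_s7 _ _ (fun i t => h01 i t (hne t))
        (fun i t i' t' => hst i t i' t' (hne t))

theorem flip_det {n : ℕ} (M : Matrix (Fin n) (Fin n) ℝ) :
    (Matrix.of fun i j : Fin n => (-1 : ℝ) ^ (i : ℕ) * M (Fin.rev i) j).det = M.det := by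
  have key : ∃ s : ℝ, (s = 1 ∨ s = -1) ∧ ∀ M : Matrix (Fin n) (Fin n) ℝ,
      (Matrix.of fun i j : Fin n => (-1 : ℝ) ^ (i : ℕ) * M (Fin.rev i) j).det = s * M.det := by
    refine ⟨(∏ i : Fin n, (-1 : ℝ) ^ (i : ℕ)) *
      ((Equiv.Perm.sign (Fin.revPerm : Equiv.Perm (Fin n)) : ℤ) : ℝ), ?_, ?_⟩
    · rw [Finset.prod_pow_eq_pow_sum]
      rcases neg_one_pow_eq_or ℝ (∑ i : Fin n, (i : ℕ)) with h | h <;>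
      rcases Int.units_eq_one_or (Equiv.Perm.sign (Fin.revPerm : Equiv.Perm (Fin n))) with h' | h' <;>
      rw [h, h'] <;> simp
    · intro M
      have := Matrix.det_mul_column (fun i : Fin n => (-1 : ℝ) ^ (i : ℕ))
        (M.submatrix (Fin.revPerm : Equiv.Perm (Fin n)) id)
      rw [Matrix.det_permute, ← mul_assoc] at this
      exact this
  obtain ⟨s, hs, h⟩ := key
  have h1 := h 1
  have h2 : 0 ≤ (Matrix.of fun i j : Fin n =>
      (-1 : ℝ) ^ (i : ℕ) * (1 : Matrix (Fin n) (Fin n) ℝ) (Fin.rev i) j).det := by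
    apply mixed_det_nonneg _ _ (fun _ => True) (fun t => n - 1 - t)
    · simp
    · intro t t' ht _
      rw [Fin.lt_def] at ht
      have := t'.isLt
      omega
    · intro t _
      have := t.isLt
      omega
    · intro i t _
      simp only [Matrix.of_apply, Matrix.one_apply, Fin.ext_iff, Fin.val_rev]
      have := t.isLt
      have := i.isLt
      by_cases h : (i : ℕ) = n - 1 - t
      · rw [if_pos h, if_pos (by omega), mul_one]
      · rw [if_neg h, if_neg (by omega), mul_zero]
    · simp
    · simp
  rw [h]
  rcases hs with hs | hs
  · rw [hs, one_mul]
  · rw [h1, hs, Matrix.det_one] at h2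
    norm_num at h2

/-- For a Dyck matrix `A`, the matrix `B = ψ(A)` has full rank `n` and all of its maximal
minors are nonnegative. -/
theorem psi_dyckMatrix_rank_and_nonneg_maximal_minors
    {n : ℕ} (A : Matrix (Fin n) (Fin n) ℝ) (hA : IsDyckMatrix A) :
    (psiMat A).rank = n ∧
    ∀ (K : Finset (Fin (2 * n))) (hK : K.card = n),
      0 ≤ ((psiMat A).submatrix id
          (fun t => (K.orderIsoOfFin hK t : Fin (2 * n)))).det := by
  constructor
  · apply le_antisymm
    · simpa using (psiMat A).rank_le_height
    · have h := (psiMat A).rank_submatrix_le id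
        (fun t : Fin n => (⟨t, by have := t.isLt; omega⟩ : Fin (2 * n)))
      have h1 : (psiMat A).submatrix id
        (fun t : Fin n => (⟨t, by have := t.isLt; omega⟩ : Fin (2 * n))) = 1 := by
        ext i j
        simp [psiMat, Matrix.one_apply, Fin.ext_iff]
      rw [h1, Matrix.rank_one] at h
      simpa using h
  · intro K hK
    obtain ⟨hA01, _, hAst⟩ := hA
    have hmono : StrictMono (fun t => (K.orderIsoOfFin hK t : Fin (2 * n))) := fun a b h =>
      (K.orderIsoOfFin hK).strictMono h
    generalize (fun t => (K.orderIsoOfFin hK t : Fin (2 * n))) = f at hmono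
    rw [← flip_det]
    have hent : ∀ (i t : Fin n) (h : ¬ (f t : ℕ) < n), (-1 : ℝ) ^ (i : ℕ) *
        ((psiMat A).submatrix id f) (Fin.rev i) t =
        A i ⟨(f t : ℕ) - n, by have := (f t).isLt; omega⟩ := by
      intro i t h
      have hi := i.isLt
      have e1 : n - 1 - (n - ((i : ℕ) + 1)) = i := by omega
      simp only [psiMat, Matrix.submatrix_apply, Matrix.of_apply, dif_neg h, id, Fin.val_rev, e1]
      rw [← mul_assoc, ← mul_pow]
      simp
    apply mixed_det_nonneg _ _ (fun t => (f t : ℕ) < n) (fun t => n - 1 - f t)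
    · intro t t' h h'
      have := Fin.le_def.1 (hmono.monotone h)
      omega
    · intro t t' h h'
      have := Fin.lt_def.1 (hmono h)
      omega
    · intro t h
      omega
    · intro i t h
      have hi := i.isLt
      simp only [psiMat, Matrix.submatrix_apply, Matrix.of_apply, dif_pos h, id, Fin.val_rev]
      by_cases h : (i : ℕ) = n - 1 - f t
      · rw [if_pos h, if_pos (by omega), mul_one]
      · rw [if_neg h, if_neg (by omega), mul_zero]
    · intro i t h
      rw [Matrix.of_apply, hent i t h]
      exact hA01 _ _
    · intro i t i' t' h h0 hi ht
      have := Fin.le_def.1 (hmono.monotone ht)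
      rw [Matrix.of_apply, hent i t h] at h0
      rw [Matrix.of_apply, hent i' t' (by omega)]
      exact hAst _ _ _ _ h0 hi (by simp only; omega)
end

section
/- Let A be an n × n Dyck matrix regarded as a real matrix and B = ψ(A). Then for every column index c ∈ {1,…,2n}, the n × (2n−1) matrix obtained from B by deleting column c still has rank n. -/
/-- The strictly increasing enumeration of `{1,…,2n} \ {c}`: the map `Fin (2n-1) → Fin (2n)`
skipping the index `c`. -/
def deleteCol {n : ℕ} (c : Fin (2 * n)) : Fin (2 * n - 1) → Fin (2 * n) :=
  fun j =>
    if h : (j : ℕ) < (c : ℕ) then ⟨(j : ℕ), by have := c.isLt; omega⟩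
    else ⟨(j : ℕ) + 1, by have := j.isLt; omega⟩

/-- For a Dyck matrix `A`, deleting any single column from `B = ψ(A)` leaves a matrix that
still has rank `n`. -/
theorem psi_dyckMatrix_rank_delete_column
    {n : ℕ} (A : Matrix (Fin n) (Fin n) ℝ) (hA : IsDyckMatrix A) :
    ∀ c : Fin (2 * n), ((psiMat A).submatrix id (deleteCol c)).rank = n := by
  intro c
  have key : LinearIndependent ℝ ((psiMat A).submatrix id (deleteCol c)).row := by
    rw [Fintype.linearIndependent_iff]
    intro v hv
    have hcol : ∀ k : Fin (2 * n), k ≠ c → ∑ i, v i * psiMat A i k = 0 := by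
      intro k hk
      have hk' : (k : ℕ) ≠ (c : ℕ) := fun h => hk (Fin.ext h)
      have hkl := k.isLt
      have hcl := c.isLt
      obtain ⟨j, hj⟩ : ∃ j : Fin (2 * n - 1), deleteCol c j = k := by
        by_cases h : (k : ℕ) < c
        · refine ⟨⟨k, by omega⟩, ?_⟩
          simp [deleteCol, h]
        · refine ⟨⟨(k : ℕ) - 1, by omega⟩, ?_⟩
          have h2 : ¬ ((k : ℕ) - 1 < c) := by omega
          simp only [deleteCol, h2, dite_false]
          apply Fin.ext
          simp only
          omega
      have := congrFun hv j
      simpa [Finset.sum_apply, Matrix.row, hj] using this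
    have hid : ∀ i : Fin n, (i : ℕ) ≠ (c : ℕ) → v i = 0 := by
      intro i hi
      have hil := i.isLt
      have := hcol ⟨i, by omega⟩ (fun h => hi (congrArg Fin.val h))
      simpa [psiMat, Fin.val_inj] using this
    intro i
    by_cases hi : (i : ℕ) = (c : ℕ)
    · have hil := i.isLt
      have h0 := hcol ⟨n, by omega⟩ (fun h => by
        have := congrArg Fin.val h
        simp only at this
        omega)
      rw [Finset.sum_eq_single i] at h0
      · have h1 := hA.2.1 ⟨n - 1 - (i : ℕ), by omega⟩ ⟨n - n, by omega⟩ (by simp)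
        simp only [psiMat, Matrix.of_apply, lt_irrefl, dite_false, h1, mul_one] at h0
        rcases mul_eq_zero.1 h0 with h | h
        · exact h
        · exact absurd h (pow_ne_zero _ (by norm_num))
      · intro b _ hb
        rw [hid b (fun h => hb (Fin.ext (h.trans hi.symm))), zero_mul]
      · simp
    · exact hid i hi
  simpa using key.rank_matrix
end

section
/- Let A be an n × n Dyck matrix and B = ψ(A) with columns B_1,…,B_{2n}, column indices taken modulo 2n. Then for every i ∈ {1,…,2n}, among the indices j ∈ {1,…,2n} such that B_i lies in the real linear span of the columns B_{i+1}, B_{i+2}, …, B_j (the indices i+1,…,j being consecutive modulo 2n) there is a minimal one with respect to the shifted linear i-order, and this minimal index j equals π_A(i). In particular, in the last clause of the definition of π_A the element j ∈ J with ω(j) = i−1 is unique when it exists. -/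
/-- The `j`-th column (1-based, `1 ≤ j ≤ 2n`) of `B = ψ(A)`, as a vector. -/
noncomputable def colB {n : ℕ} (A : Matrix (Fin n) (Fin n) ℝ) (j : ℕ) : Fin n → ℝ :=
  fun r => if h : j - 1 < 2 * n then psiMat A r ⟨j - 1, h⟩ else 0

/-- The set of principal indices `J = {j ∈ {n+1,…,2n} : B_j ≠ B_{j-1}}` (1-based). -/
def JSet {n : ℕ} (A : Matrix (Fin n) (Fin n) ℝ) : Set ℕ :=
  {j | n + 1 ≤ j ∧ j ≤ 2 * n ∧ colB A j ≠ colB A (j - 1)}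

open Classical in
/-- The weight map `ω` (1-based): `ω(j) = j` for `j ≤ n`, and `ω(j)` is the number of nonzero
entries of the column `B_j` for `n+1 ≤ j ≤ 2n`. -/
noncomputable def omegaB {n : ℕ} (A : Matrix (Fin n) (Fin n) ℝ) (j : ℕ) : ℕ :=
  if j ≤ n then j
  else (Finset.univ.filter fun r : Fin n => colB A j r ≠ 0).card

open Classical in
/-- The map `π_A` on `{1,…,2n}` (1-based). -/
noncomputable def piA {n : ℕ} (A : Matrix (Fin n) (Fin n) ℝ) : ℕ → ℕ := fun i =>
  if i = 1 then n + 1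
  else if i ≤ n then
    (if h : ∃ j, j ∈ JSet A ∧ omegaB A j = i - 1 then h.choose else i - 1)
  else if i < 2 * n then (if i + 1 ∈ JSet A then omegaB A i else i + 1)
  else omegaB A (2 * n)

/-- The position of `t ∈ {1,…,m}` in the shifted linear `i`-order on `{1,…,m}` (1-based):
`i` has position `0`, `i+1` position `1`, … cyclically. -/
def shiftPos (m i t : ℕ) : ℕ := (t + m - i) % m

/-- `B_i` lies in the span of the columns `B_{i+1}, …, B_j`, the indices `i+1,…,j` being taken
consecutively modulo `2n` (in `{1,…,2n}`, 1-based). -/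
noncomputable def SpannedBySegment {n : ℕ} (A : Matrix (Fin n) (Fin n) ℝ) (i j : ℕ) : Prop :=
  colB A i ∈ Submodule.span ℝ
    {v : Fin n → ℝ | ∃ t, 1 ≤ t ∧ t ≤ 2 * n ∧
      1 ≤ shiftPos (2 * n) i t ∧ shiftPos (2 * n) i t ≤ shiftPos (2 * n) i j ∧
      v = colB A t}

lemma aux_mem_iff_lt_card {n : ℕ} (S : Finset (Fin n))
    (h : ∀ a b : Fin n, a ≤ b → b ∈ S → a ∈ S) (r : Fin n) : r ∈ S ↔ (r : ℕ) < S.card := by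
  constructor
  · intro hr
    have : Finset.Iic r ⊆ S := fun a ha => h a r (Finset.mem_Iic.1 ha) hr
    have := Finset.card_le_card this
    rw [Fin.card_Iic] at this
    omega
  · intro hr
    by_contra hn
    have : S ⊆ Finset.Iio r := by
      intro a ha
      rw [Finset.mem_Iio]
      by_contra hlt
      exact hn (h r a (not_lt.1 hlt) ha)
    have := Finset.card_le_card this
    rw [Fin.card_Iio] at this
    omega

lemma aux_col_lo {n : ℕ} (A : Matrix (Fin n) (Fin n) ℝ) (j : ℕ) (h1 : 1 ≤ j) (h2 : j ≤ n)
    (r : Fin n) : colB A j r = if (r : ℕ) + 1 = j then 1 else 0 := by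
  unfold colB psiMat
  rw [dif_pos (by omega)]
  simp only [Matrix.of_apply]
  rw [dif_pos (by omega)]
  by_cases h : (r : ℕ) + 1 = j
  · rw [if_pos h, if_pos (by omega)]
  · rw [if_neg h, if_neg (by omega)]

lemma aux_col_hi {n : ℕ} (A : Matrix (Fin n) (Fin n) ℝ) (j : ℕ) (h1 : n < j) (h2 : j ≤ 2 * n)
    (r : Fin n) : colB A j r = (-1 : ℝ) ^ (n - 1 - (r : ℕ)) *
      A ⟨n - 1 - (r : ℕ), by omega⟩ ⟨j - 1 - n, by omega⟩ := by
  unfold colB psiMat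
  rw [dif_pos (by omega)]
  simp only [Matrix.of_apply]
  rw [dif_neg (by omega)]

lemma aux_ne_iff {n : ℕ} (A : Matrix (Fin n) (Fin n) ℝ) (hA : IsDyckMatrix A) (j : ℕ)
    (h1 : n < j) (h2 : j ≤ 2 * n) (r : Fin n) :
    colB A j r ≠ 0 ↔ A ⟨n - 1 - (r : ℕ), by omega⟩ ⟨j - 1 - n, by omega⟩ ≠ 0 := by
  rw [aux_col_hi A j h1 h2]
  simp

lemma aux_omega_iff {n : ℕ} (A : Matrix (Fin n) (Fin n) ℝ) (hA : IsDyckMatrix A) (j : ℕ)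
    (h1 : n < j) (h2 : j ≤ 2 * n) (r : Fin n) :
    colB A j r ≠ 0 ↔ (r : ℕ) < omegaB A j := by
  classical
  unfold omegaB
  rw [if_neg (by omega)]
  have := aux_mem_iff_lt_card (Finset.univ.filter fun r : Fin n => colB A j r ≠ 0) (by
    intro a b hab hb
    simp only [Finset.mem_filter, Finset.mem_univ, true_and] at hb ⊢
    rw [aux_ne_iff A hA j h1 h2] at hb ⊢
    intro h0
    have hab' : (a : ℕ) ≤ b := hab
    exact hb (hA.2.2 _ _ _ _ h0 (by simp only; omega) le_rfl)) r
  simp only [Finset.mem_filter, Finset.mem_univ, true_and] at this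
  convert this

lemma aux_col {n : ℕ} (A : Matrix (Fin n) (Fin n) ℝ) (hA : IsDyckMatrix A) (j : ℕ)
    (h1 : n < j) (h2 : j ≤ 2 * n) (r : Fin n) :
    colB A j r = if (r : ℕ) < omegaB A j then (-1 : ℝ) ^ (n - 1 - (r : ℕ)) else 0 := by
  have h := aux_omega_iff A hA j h1 h2 r
  split_ifs with hr
  · have h3 := (aux_ne_iff A hA j h1 h2 r).1 (h.2 hr)
    rw [aux_col_hi A j h1 h2]
    rcases hA.1 ⟨n - 1 - (r : ℕ), by omega⟩ ⟨j - 1 - n, by omega⟩ with h4 | h4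
    · exact absurd h4 h3
    · rw [h4, mul_one]
  · by_contra h5
    exact hr (h.1 h5)

lemma aux_omega_le {n : ℕ} (A : Matrix (Fin n) (Fin n) ℝ) (j : ℕ) (h1 : n < j) :
    omegaB A j ≤ n := by
  classical
  unfold omegaB
  rw [if_neg (by omega)]
  exact (Finset.card_le_univ _).trans (by simp)

lemma aux_omega_anti {n : ℕ} (A : Matrix (Fin n) (Fin n) ℝ) (hA : IsDyckMatrix A) (j j' : ℕ)
    (h1 : n < j) (h2 : j ≤ j') (h3 : j' ≤ 2 * n) : omegaB A j' ≤ omegaB A j := by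
  by_contra hlt
  have hle := aux_omega_le A j' (by omega)
  have h := (aux_omega_iff A hA j' (by omega) h3 ⟨omegaB A j, by omega⟩).2 (by simp only; omega)
  rw [aux_ne_iff A hA j' (by omega) h3] at h
  have h' : ¬ colB A j ⟨omegaB A j, by omega⟩ ≠ 0 := by
    rw [aux_omega_iff A hA j h1 (by omega)]
    simp
  rw [aux_ne_iff A hA j h1 (by omega), not_not] at h'
  exact h (hA.2.2 _ _ _ _ h' le_rfl (by simp only; omega))

lemma aux_omega_first {n : ℕ} (A : Matrix (Fin n) (Fin n) ℝ) (hA : IsDyckMatrix A)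
    (hn : 0 < n) : omegaB A (n + 1) = n := by
  apply le_antisymm (aux_omega_le A _ (by omega))
  have h := (aux_omega_iff A hA (n + 1) (by omega) (by omega) ⟨n - 1, by omega⟩).1 (by
    rw [aux_ne_iff A hA (n + 1) (by omega) (by omega), hA.2.1 _ _ (by simp)]
    exact one_ne_zero)
  simp only at h
  omega

lemma aux_omega_pos {n : ℕ} (A : Matrix (Fin n) (Fin n) ℝ) (hA : IsDyckMatrix A) (j : ℕ)
    (h1 : n < j) (h2 : j ≤ 2 * n) : 1 ≤ omegaB A j := by
  have h := (aux_omega_iff A hA j (by omega) (by omega) ⟨0, by omega⟩).1 (by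
    rw [aux_ne_iff A hA j (by omega) (by omega), hA.2.1 _ _ (by simp only; omega)]
    exact one_ne_zero)
  simp only at h
  omega

lemma aux_J_iff {n : ℕ} (A : Matrix (Fin n) (Fin n) ℝ) (hA : IsDyckMatrix A) (j : ℕ)
    (h1 : n + 1 < j) (h2 : j ≤ 2 * n) : j ∈ JSet A ↔ omegaB A j ≠ omegaB A (j - 1) := by
  unfold JSet
  simp only [Set.mem_ofPred_eq]
  constructor
  · rintro ⟨-, -, h⟩ he
    apply h
    funext r
    rw [aux_col A hA j (by omega) h2, aux_col A hA (j - 1) (by omega) (by omega), he]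
  · intro h
    refine ⟨by omega, h2, fun he => h ?_⟩
    have ha := aux_omega_anti A hA (j - 1) j (by omega) (by omega) h2
    have hle := aux_omega_le A (j - 1) (by omega)
    by_contra hne
    have h3 := (aux_omega_iff A hA (j - 1) (by omega) (by omega) ⟨omegaB A j, by omega⟩).2
      (by simp only; omega)
    rw [← he, aux_omega_iff A hA j (by omega) (by omega)] at h3
    simp at h3

lemma aux_J_unique {n : ℕ} (A : Matrix (Fin n) (Fin n) ℝ) (hA : IsDyckMatrix A) (j j' : ℕ)
    (h : j < j') (hj : j ∈ JSet A) (hj' : j' ∈ JSet A) : omegaB A j ≠ omegaB A j' := by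
  intro he
  have h1 : n + 1 ≤ j := hj.1
  have h2 : j' ≤ 2 * n := hj'.2.1
  have h3 := (aux_J_iff A hA j' (by omega) h2).1 hj'
  have h4 := aux_omega_anti A hA j (j' - 1) (by omega) (by omega) (by omega)
  have h5 := aux_omega_anti A hA (j' - 1) j' (by omega) (by omega) (by omega)
  omega

lemma aux_shift {m i t : ℕ} (h1 : 1 ≤ i) (h2 : i ≤ m) (h3 : 1 ≤ t) (h4 : t ≤ m) :
    (i ≤ t ∧ shiftPos m i t = t - i) ∨ (t < i ∧ shiftPos m i t = t + m - i) := by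
  unfold shiftPos
  by_cases h : i ≤ t
  · left
    refine ⟨h, ?_⟩
    rw [show t + m - i = (t - i) + m by omega, Nat.add_mod_right, Nat.mod_eq_of_lt (by omega)]
  · right
    exact ⟨by omega, Nat.mod_eq_of_lt (by omega)⟩

lemma aux_lower {n : ℕ} (A : Matrix (Fin n) (Fin n) ℝ) (i p : ℕ) (f : (Fin n → ℝ) →ₗ[ℝ] ℝ)
    (hf : f (colB A i) ≠ 0)
    (h0 : ∀ t, 1 ≤ t → t ≤ 2 * n → 1 ≤ shiftPos (2 * n) i t →
      shiftPos (2 * n) i t < shiftPos (2 * n) i p → f (colB A t) = 0)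
    (j : ℕ) (hs : SpannedBySegment A i j) : shiftPos (2 * n) i p ≤ shiftPos (2 * n) i j := by
  by_contra hlt
  apply hf
  have : Submodule.span ℝ {v : Fin n → ℝ | ∃ t, 1 ≤ t ∧ t ≤ 2 * n ∧
      1 ≤ shiftPos (2 * n) i t ∧ shiftPos (2 * n) i t ≤ shiftPos (2 * n) i j ∧
      v = colB A t} ≤ LinearMap.ker f := by
    rw [Submodule.span_le]
    rintro v ⟨t, h1, h2, h3, h4, rfl⟩
    exact h0 t h1 h2 h3 (by omega)
  exact this hs

lemma aux_sum {n : ℕ} (A : Matrix (Fin n) (Fin n) ℝ) (v : Fin n → ℝ) :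
    v = ∑ r : Fin n, v r • colB A ((r : ℕ) + 1) := by
  funext x
  rw [Finset.sum_apply, Finset.sum_eq_single x]
  · simp [aux_col_lo A ((x : ℕ) + 1) (by omega) (by omega)]
  · intro b _ hb
    rw [Pi.smul_apply, aux_col_lo A ((b : ℕ) + 1) (by omega) (by omega), if_neg, smul_zero]
    intro h
    exact hb (Fin.ext (by omega))
  · simp

lemma aux_span_all {n : ℕ} (A : Matrix (Fin n) (Fin n) ℝ) (W : Submodule ℝ (Fin n → ℝ))
    (v : Fin n → ℝ) (h : ∀ r : Fin n, v r ≠ 0 → colB A ((r : ℕ) + 1) ∈ W) : v ∈ W := by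
  rw [aux_sum A v]
  refine Submodule.sum_mem _ fun r _ => ?_
  by_cases h0 : v r = 0
  · rw [h0, zero_smul]; exact W.zero_mem
  · exact W.smul_mem _ (h r h0)

lemma aux_span_one {n : ℕ} (A : Matrix (Fin n) (Fin n) ℝ) (W : Submodule ℝ (Fin n → ℝ))
    (v : Fin n → ℝ) (hv : v ∈ W) (x : Fin n) (hx : v x ≠ 0)
    (h : ∀ r : Fin n, r ≠ x → v r ≠ 0 → colB A ((r : ℕ) + 1) ∈ W) :
    colB A ((x : ℕ) + 1) ∈ W := by
  have hu : v - v x • colB A ((x : ℕ) + 1) ∈ W := by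
    apply aux_span_all A
    intro r hr
    have hrx : r ≠ x := by
      rintro rfl
      apply hr
      simp [aux_col_lo A ((r : ℕ) + 1) (by omega) (by omega)]
    apply h r hrx
    intro h0
    apply hr
    rw [Pi.sub_apply, Pi.smul_apply, aux_col_lo A ((x : ℕ) + 1) (by omega) (by omega), if_neg, h0]
    · simp
    · intro h; exact hrx (Fin.ext (by omega))
  have h2 : v x • colB A ((x : ℕ) + 1) ∈ W := by
    have := W.sub_mem hv hu
    simpa using this
  have h3 := W.smul_mem (v x)⁻¹ h2
  rwa [smul_smul, inv_mul_cancel₀ hx, one_smul] at h3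

/-- the functional separating rows `x-1` and `x` -/
lemma aux_functional {n : ℕ} (x y : Fin n) (hxy : (y : ℕ) + 1 = x) :
    ∃ f : (Fin n → ℝ) →ₗ[ℝ] ℝ, ∀ v, f v = v x + v y := 
  ⟨(LinearMap.proj x : (Fin n → ℝ) →ₗ[ℝ] ℝ) + (LinearMap.proj y : (Fin n → ℝ) →ₗ[ℝ] ℝ),
    fun v => by rw [LinearMap.add_apply, LinearMap.proj_apply, LinearMap.proj_apply]⟩

lemma aux_sign {n : ℕ} (x y : Fin n) (hxy : (y : ℕ) + 1 = x) :
    (-1 : ℝ) ^ (n - 1 - (x : ℕ)) + (-1 : ℝ) ^ (n - 1 - (y : ℕ)) = 0 := by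
  rw [show n - 1 - (y : ℕ) = (n - 1 - (x : ℕ)) + 1 by omega, pow_succ]
  ring

lemma aux_fun_zero {n : ℕ} (A : Matrix (Fin n) (Fin n) ℝ) (hA : IsDyckMatrix A)
    (x y : Fin n) (hxy : (y : ℕ) + 1 = x) (t : ℕ)
    (h1 : n < t) (h2 : t ≤ 2 * n) (hne : omegaB A t ≠ x) : colB A t x + colB A t y = 0 := by
  rw [aux_col A hA t h1 h2, aux_col A hA t h1 h2]
  by_cases h : (x : ℕ) < omegaB A t
  · rw [if_pos h, if_pos (by omega), aux_sign x y hxy]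
  · rw [if_neg h, if_neg (by omega), add_zero]


/-- For each `i ∈ {1,…,2n}`, among the `j` with `B_i ∈ span(B_{i+1},…,B_j)` there is a minimal
one in the shifted `i`-order, and it equals `π_A(i)`; moreover the element `j ∈ J` with
`ω(j) = i - 1` is unique when it exists. -/
theorem piA_eq_min_span_index
    {n : ℕ} (A : Matrix (Fin n) (Fin n) ℝ) (hA : IsDyckMatrix A) :
    (∀ i, 1 ≤ i → i ≤ 2 * n →
      SpannedBySegment A i (piA A i) ∧
      ∀ j, 1 ≤ j → j ≤ 2 * n → SpannedBySegment A i j →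
        shiftPos (2 * n) i (piA A i) ≤ shiftPos (2 * n) i j) ∧
    (∀ j j', j ∈ JSet A → j' ∈ JSet A → omegaB A j = omegaB A j' → j = j') := by
  refine ⟨?_, ?_⟩
  swap
  · intro j j' hj hj' he
    rcases lt_trichotomy j j' with h | h | h
    · exact absurd he (aux_J_unique A hA j j' h hj hj')
    · exact h
    · exact absurd he.symm (aux_J_unique A hA j' j h hj' hj)
  intro i hi1 hi2
  have hn : 0 < n := by omega
  have hfirst := aux_omega_first A hA hn
  by_cases hin : i ≤ n
  · -- identity columns
    by_cases hi : i = 1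
    · have hp : piA A i = n + 1 := by unfold piA; rw [if_pos hi]
      rw [hp]
      subst hi
      have hs := aux_shift (m := 2 * n) (i := 1) (t := n + 1) (by omega) (by omega) (by omega)
        (by omega)
      constructor
      · apply aux_span_one A _ (colB A (n + 1)) (Submodule.subset_span ?_) ⟨0, hn⟩
        · rw [aux_omega_iff A hA _ (by omega) (by omega)]
          simp only; omega
        · intro r hr _
          have : (r : ℕ) ≠ 0 := fun h => hr (Fin.ext h)
          apply Submodule.subset_span
          have hs' := aux_shift (m := 2 * n) (i := 1) (t := r + 1) (by omega) (by omega)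
            (by omega) (by omega)
          exact ⟨r + 1, by omega, by omega, by omega, by omega, rfl⟩
        · exact ⟨n + 1, by omega, by omega, by omega, by omega, rfl⟩
      · intro j _ _ hj
        refine aux_lower A _ _ (LinearMap.proj ⟨0, hn⟩) ?_ ?_ j hj
        · rw [LinearMap.proj_apply, aux_col_lo A 1 le_rfl hn]
          simp
        · intro t h1 h2 h3 h4
          have hs' := aux_shift (m := 2 * n) (i := 1) (t := t) (by omega) (by omega)
            (by omega) (by omega)
          rw [LinearMap.proj_apply, aux_col_lo A t (by omega) (by omega), if_neg]
          simp only; omega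
    · obtain ⟨x, hx⟩ : ∃ x : Fin n, (x : ℕ) + 1 = i := ⟨⟨i - 1, by omega⟩, by simp only; omega⟩
      obtain ⟨y, hy⟩ : ∃ y : Fin n, (y : ℕ) + 1 = x := ⟨⟨i - 2, by omega⟩, by simp only; omega⟩
      obtain ⟨f, hf⟩ := aux_functional x y hy
      have hfi : f (colB A i) ≠ 0 := by
        rw [hf, aux_col_lo A i hi1 hin, aux_col_lo A i hi1 hin, if_pos hx, if_neg (by omega)]
        norm_num
      have hflo : ∀ t, 1 ≤ t → t ≤ n → t ≠ i → t ≠ i - 1 → f (colB A t) = 0 := by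
        intro t h1 h2 h3 h4
        rw [hf, aux_col_lo A t h1 h2, aux_col_lo A t h1 h2, if_neg (by omega), if_neg (by omega),
          add_zero]
      have hfhi : ∀ t, n < t → t ≤ 2 * n → omegaB A t ≠ x → f (colB A t) = 0 := by
        intro t h1 h2 h3
        rw [hf, aux_fun_zero A hA x y hy t h1 h2 h3]
      by_cases hex : ∃ j, j ∈ JSet A ∧ omegaB A j = i - 1
      · have hp : piA A i = hex.choose := by
          unfold piA
          rw [if_neg hi, if_pos hin, dif_pos hex]
        obtain ⟨hpJ, hpw⟩ := hex.choose_spec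
        rw [hp]
        generalize hex.choose = p at hpJ hpw
        have hp1 : n + 1 ≤ p := hpJ.1
        have hp2 : p ≤ 2 * n := hpJ.2.1
        have hp3 : p ≠ n + 1 := by rintro rfl; omega
        have hpne := (aux_J_iff A hA p (by omega) hp2).1 hpJ
        have hanti := aux_omega_anti A hA (p - 1) p (by omega) (by omega) hp2
        have hs := aux_shift (m := 2 * n) (i := i) (t := p) (by omega) (by omega) (by omega)
          (by omega)
        constructor
        · unfold SpannedBySegment
          rw [show colB A i = colB A ((x : ℕ) + 1) by rw [hx]]
          apply aux_span_one A _ (colB A (p - 1) - colB A p) (Submodule.sub_mem _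
            (Submodule.subset_span ?_) (Submodule.subset_span ?_)) x
          · rw [Pi.sub_apply, aux_col A hA p (by omega) hp2,
              aux_col A hA (p - 1) (by omega) (by omega), if_pos (by omega), if_neg (by omega)]
            simp
          · intro r hr hr0
            have hrx : (r : ℕ) ≠ x := fun h => hr (Fin.ext h)
            have : ¬ (r : ℕ) < omegaB A p := by
              intro h
              apply hr0
              rw [Pi.sub_apply, aux_col A hA p (by omega) hp2,
                aux_col A hA (p - 1) (by omega) (by omega), if_pos (by omega), if_pos (by omega),
                sub_self]
            apply Submodule.subset_span
            have hs' := aux_shift (m := 2 * n) (i := i) (t := r + 1) (by omega) (by omega)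
              (by omega) (by omega)
            exact ⟨r + 1, by omega, by omega, by omega, by omega, rfl⟩
          · have hs' := aux_shift (m := 2 * n) (i := i) (t := p - 1) (by omega) (by omega)
              (by omega) (by omega)
            exact ⟨p - 1, by omega, by omega, by omega, by omega, rfl⟩
          · exact ⟨p, by omega, by omega, by omega, by omega, rfl⟩
        · intro j _ _ hj
          refine aux_lower A _ _ f hfi ?_ j hj
          intro t h1 h2 h3 h4
          have hs' := aux_shift (m := 2 * n) (i := i) (t := t) (by omega) (by omega)
            (by omega) (by omega)
          by_cases htn : t ≤ n
          · exact hflo t h1 htn (by omega) (by omega)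
          · have := aux_omega_anti A hA t (p - 1) (by omega) (by omega) (by omega)
            exact hfhi t (by omega) h2 (by omega)
      · have hp : piA A i = i - 1 := by
          unfold piA
          rw [if_neg hi, if_pos hin, dif_neg hex]
        rw [hp]
        have hno : ∀ t, n < t → t ≤ 2 * n → omegaB A t ≠ x := by
          intro t
          induction t with
          | zero => intro h; omega
          | succ k ih =>
            intro h1 h2 h3
            by_cases hk : k = n
            · subst hk; omega
            · have h4 := ih (by omega) (by omega)
              apply hex
              refine ⟨k + 1, ?_, by omega⟩
              rw [aux_J_iff A hA (k + 1) (by omega) h2, h3]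
              exact fun h => h4 h.symm
        have hs := aux_shift (m := 2 * n) (i := i) (t := i - 1) (by omega) (by omega) (by omega)
          (by omega)
        constructor
        · unfold SpannedBySegment
          rw [show colB A i = colB A ((x : ℕ) + 1) by rw [hx]]
          apply aux_span_one A _ (colB A (n + 1)) (Submodule.subset_span ?_) x
          · rw [aux_omega_iff A hA _ (by omega) (by omega)]
            omega
          · intro r hr _
            have : (r : ℕ) ≠ x := fun h => hr (Fin.ext h)
            apply Submodule.subset_span
            have hs' := aux_shift (m := 2 * n) (i := i) (t := r + 1) (by omega) (by omega)
              (by omega) (by omega)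
            exact ⟨r + 1, by omega, by omega, by omega, by omega, rfl⟩
          · have hs' := aux_shift (m := 2 * n) (i := i) (t := n + 1) (by omega) (by omega)
              (by omega) (by omega)
            exact ⟨n + 1, by omega, by omega, by omega, by omega, rfl⟩
        · intro j _ _ hj
          refine aux_lower A _ _ f hfi ?_ j hj
          intro t h1 h2 h3 h4
          have hs' := aux_shift (m := 2 * n) (i := i) (t := t) (by omega) (by omega)
            (by omega) (by omega)
          by_cases htn : t ≤ n
          · exact hflo t h1 htn (by omega) (by omega)
          · exact hfhi t (by omega) h2 (hno t (by omega) h2)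
  · have hwpos := aux_omega_pos A hA i (by omega) hi2
    have hwle := aux_omega_le A i (by omega)
    obtain ⟨x, hx⟩ : ∃ x : Fin n, (x : ℕ) + 1 = omegaB A i :=
      ⟨⟨omegaB A i - 1, by omega⟩, by simp only; omega⟩
    have hfi : (LinearMap.proj x : (Fin n → ℝ) →ₗ[ℝ] ℝ) (colB A i) ≠ 0 := by
      rw [LinearMap.proj_apply, aux_omega_iff A hA i (by omega) hi2]
      omega
    by_cases hc : i < 2 * n ∧ i + 1 ∉ JSet A
    · have hp : piA A i = i + 1 := by
        unfold piA
        rw [if_neg (by omega), if_neg hin, if_pos hc.1, if_neg hc.2]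
      rw [hp]
      have hs := aux_shift (m := 2 * n) (i := i) (t := i + 1) (by omega) (by omega) (by omega)
        (by omega)
      have heq : colB A i = colB A (i + 1) := by
        by_contra hne
        exact hc.2 ⟨by omega, by omega, fun h => hne h.symm⟩
      constructor
      · unfold SpannedBySegment
        rw [heq]
        exact Submodule.subset_span ⟨i + 1, by omega, by omega, by omega, by omega, rfl⟩
      · intro j _ _ hj
        refine aux_lower A _ _ _ hfi ?_ j hj
        intro t h1 h2 h3 h4
        omega
    · have hp : piA A i = omegaB A i := by
        unfold piA
        rw [if_neg (by omega), if_neg hin]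
        by_cases h : i < 2 * n
        · rw [if_pos h, if_pos (by tauto)]
        · rw [if_neg h, show i = 2 * n by omega]
      rw [hp]
      have hs := aux_shift (m := 2 * n) (i := i) (t := omegaB A i) (by omega) (by omega)
        (by omega) (by omega)
      constructor
      · apply aux_span_all A
        intro r hr
        rw [aux_omega_iff A hA i (by omega) hi2] at hr
        apply Submodule.subset_span
        have hs' := aux_shift (m := 2 * n) (i := i) (t := r + 1) (by omega) (by omega)
          (by omega) (by omega)
        exact ⟨r + 1, by omega, by omega, by omega, by omega, rfl⟩
      · intro j _ _ hj
        refine aux_lower A _ _ _ hfi ?_ j hj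
        intro t h1 h2 h3 h4
        have hs' := aux_shift (m := 2 * n) (i := i) (t := t) (by omega) (by omega)
          (by omega) (by omega)
        rw [LinearMap.proj_apply]
        by_cases htn : t ≤ n
        · rw [aux_col_lo A t h1 htn, if_neg (by omega)]
        · have hJ : i + 1 ∈ JSet A := by
            by_contra hJ
            exact hc ⟨by omega, hJ⟩
          have h5 := (aux_J_iff A hA (i + 1) (by omega) (by omega)).1 hJ
          rw [Nat.add_sub_cancel] at h5
          have h6 := aux_omega_anti A hA i (i + 1) (by omega) (by omega) (by omega)
          have h7 := aux_omega_anti A hA (i + 1) t (by omega) (by omega) (by omega)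
          rw [aux_col A hA t (by omega) h2, if_neg (by omega)]
end

section
/- Let A be an n × n Dyck matrix. Then π_A is a permutation of {1,…,2n}, and its inverse π_A^{-1} satisfies conditions (1)–(2); in particular, π_A^{-1} is a single 2n-cycle through 1. -/
/-- Conditions (1)–(2) for a permutation of `{1,…,2n}` (encoded 0-based on `Fin (2n)`). -/
def SatisfiesConds (n : ℕ) (hn : 0 < n) (σ : Equiv.Perm (Fin (2 * n))) : Prop :=
  ∀ one : Fin (2 * n), one = ⟨0, by omega⟩ →
    ((∀ m : Fin (2 * n), ∃ k, k < 2 * n ∧ (σ ^ k) one = m) ∧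
     (∀ k l : ℕ, k < l → l < 2 * n →
        ((σ ^ k) one : ℕ) < n → ((σ ^ l) one : ℕ) < n →
        ((σ ^ k) one : ℕ) < ((σ ^ l) one : ℕ)) ∧
     (∀ k l : ℕ, k < l → l < 2 * n →
        n ≤ ((σ ^ k) one : ℕ) → n ≤ ((σ ^ l) one : ℕ) →
        ((σ ^ l) one : ℕ) < ((σ ^ k) one : ℕ)) ∧
     (∀ k : ℕ, 1 ≤ k → k ≤ 2 * n - 1 →
        ((Finset.range (k + 1)).filter (fun t => n ≤ ((σ ^ t) one : ℕ))).card ≤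
        ((Finset.range (k + 1)).filter (fun t => ((σ ^ t) one : ℕ) < n)).card))


theorem abs_core (n : ℕ) (hn : 0 < n) (f P : ℕ → ℕ)
    (hr : ∀ x, 1 ≤ x → x ≤ 2 * n → P x < 2 * n)
    (hinj : ∀ x y, 1 ≤ x → x ≤ 2 * n → 1 ≤ y → y ≤ 2 * n → P x = P y → x = y)
    (hf : ∀ x, 1 ≤ x → x ≤ 2 * n → 1 ≤ f x ∧ f x ≤ 2 * n)
    (h1 : P 1 = 0) (hf1 : P (f 1) = 2 * n - 1)
    (hstep : ∀ x, 1 < x → x ≤ 2 * n → P (f x) + 1 = P x)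
    (hsm : ∀ x y, 1 ≤ x → x ≤ y → y ≤ n → P x ≤ P y)
    (hbig : ∀ x y, n < x → x ≤ y → y ≤ 2 * n → P y ≤ P x)
    (hd : ∀ x, n < x → x ≤ 2 * n → P (2 * n + 1 - x) ≤ P x) :
    Set.BijOn f (Set.Icc 1 (2 * n)) (Set.Icc 1 (2 * n)) ∧
    ∃ σ : Equiv.Perm (Fin (2 * n)),
      (∀ x : Fin (2 * n), f ((σ x : ℕ) + 1) = (x : ℕ) + 1) ∧
      SatisfiesConds n hn σ := by
  obtain ⟨m, hm⟩ : ∃ m, 2 * n = m + 1 := ⟨2 * n - 1, by omega⟩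
  let p : Fin (2 * n) → Fin (2 * n) := fun x => ⟨P (x + 1), hr _ (by omega) (by omega)⟩
  have hpv : ∀ x, (p x : ℕ) = P (x + 1) := fun x => rfl
  have pinj : Function.Injective p := by
    intro x y h
    have := hinj (x + 1) (y + 1) (by omega) (by omega) (by omega) (by omega)
      (by rw [← hpv, ← hpv, h])
    ext; omega
  let e : Fin (2 * n) ≃ Fin (2 * n) := Equiv.ofBijective p (Finite.injective_iff_bijective.1 pinj)
  have hev : ∀ x, (e x : ℕ) = P (x + 1) := fun x => rfl
  let rot : Fin (2 * n) ≃ Fin (2 * n) := finRotate (2 * n)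
  have hrot : ∀ x : Fin (2 * n), (rot x : ℕ) = if (x : ℕ) = 2 * n - 1 then 0 else (x : ℕ) + 1 := by
    intro x
    have : ∀ N (hN : 0 < N) (x : Fin N),
        (finRotate N x : ℕ) = if (x : ℕ) = N - 1 then 0 else (x : ℕ) + 1 := by
      intro N hN x
      obtain ⟨M, rfl⟩ : ∃ M, N = M + 1 := ⟨N - 1, by omega⟩
      rw [coe_finRotate]
      simp [Fin.ext_iff]
    exact this _ (by omega) x
  let σ : Equiv.Perm (Fin (2 * n)) := (e.trans rot).trans e.symm
  have hσ : ∀ x, e (σ x) = rot (e x) := by intro x; simp [σ]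
  have key : ∀ x : Fin (2 * n), f ((σ x : ℕ) + 1) = (x : ℕ) + 1 := by
    intro x
    obtain ⟨a, b⟩ := hf ((σ x : ℕ) + 1) (by omega) (by omega)
    apply hinj _ _ a b (by omega) (by omega)
    have h := congrArg Fin.val (hσ x)
    rw [hrot, hev, hev] at h
    have hlt := hr (x + 1) (by omega) (by omega)
    by_cases h0 : (σ x : ℕ) = 0
    · rw [h0] at h ⊢
      simp only [zero_add] at h ⊢
      rw [h1] at h
      split_ifs at h with h2
      rw [hf1, h2]
    · have := hstep ((σ x : ℕ) + 1) (by omega) (by omega)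
      split_ifs at h with h2
      · omega
      · omega
  refine ⟨⟨?_, ?_, ?_⟩, σ, key, ?_⟩
  · intro x hx
    exact hf x hx.1 hx.2
  · have h : ∀ x, 1 ≤ x → x ≤ 2 * n → ∃ z : Fin (2 * n), x = (σ z : ℕ) + 1 := by
      intro x a b
      refine ⟨σ.symm ⟨x - 1, by omega⟩, ?_⟩
      rw [Equiv.apply_symm_apply]
      simp only
      omega
    intro x hx y hy hxy
    obtain ⟨z, rfl⟩ := h x hx.1 hx.2
    obtain ⟨w, rfl⟩ := h y hy.1 hy.2
    rw [key, key] at hxy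
    have : z = w := by ext; omega
    rw [this]
  · intro y hy
    have hy' := hy.1
    have hy'' := hy.2
    refine ⟨(σ ⟨y - 1, by omega⟩ : ℕ) + 1, ⟨by omega, by omega⟩, ?_⟩
    rw [key]
    simp only
    omega
  · intro one hone
    have hpow : ∀ k, k < 2 * n → (e ((σ ^ k) one) : ℕ) = k := by
      intro k
      induction k with
      | zero => intro _; rw [hev]; simp [hone, h1]
      | succ k ih =>
        intro hk
        rw [pow_succ', Equiv.Perm.mul_apply, hσ, hrot, ih (by omega), if_neg (by omega)]
    have hpow' : ∀ k, k < 2 * n → P ((σ ^ k) one + 1) = k := by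
      intro k hk; rw [← hev]; exact hpow k hk
    have hsurj : ∀ m, (σ ^ (e m : ℕ)) one = m := by
      intro m
      apply e.injective
      ext
      exact hpow _ (e m).isLt
    refine ⟨fun m => ⟨e m, (e m).isLt, hsurj m⟩, ?_, ?_, ?_⟩
    · intro k l hkl hl a b
      by_contra hc
      have := hsm ((σ ^ l) one + 1) ((σ ^ k) one + 1) (by omega) (by omega) (by omega)
      rw [hpow' _ hl, hpow' _ (by omega)] at this
      omega
    · intro k l hkl hl a b
      by_contra hc
      have := hbig ((σ ^ k) one + 1) ((σ ^ l) one + 1) (by omega) (by omega) (by omega)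
      rw [hpow' _ hl, hpow' _ (by omega)] at this
      omega
    · intro k _ hk
      apply Finset.card_le_card_of_injOn (fun t => (e (Fin.rev ((σ ^ t) one)) : ℕ))
      · intro t ht
        simp only [Finset.coe_filter, Finset.mem_range, Set.mem_ofPred_eq] at ht ⊢
        rw [hsurj]
        have h := hd ((σ ^ t) one + 1) (by omega) (by omega)
        rw [hpow' _ (by omega)] at h
        rw [hev, Fin.val_rev]
        have e1 : 2 * n - ((((σ ^ t) one : Fin (2 * n)) : ℕ) + 1) + 1
          = 2 * n + 1 - ((((σ ^ t) one : Fin (2 * n)) : ℕ) + 1) := by omega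
        rw [e1]
        omega
      · intro t ht t' ht' h
        simp only [Finset.coe_filter, Finset.mem_range, Set.mem_ofPred_eq] at ht ht'
        have h2 := Fin.rev_injective (e.injective (Fin.ext h))
        rw [← hpow t (by omega), ← hpow t' (by omega), h2]

theorem abs_w (n : ℕ) (hn : 0 < n) (f w : ℕ → ℕ) (J : Set ℕ)
    (w1 : w 1 = n)
    (wanti : ∀ i j, 1 ≤ i → i ≤ j → j ≤ n → w j ≤ w i)
    (wge : ∀ j, 1 ≤ j → j ≤ n → n + 1 ≤ w j + j)
    (hJr : ∀ j ∈ J, n + 1 ≤ j ∧ j ≤ 2 * n)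
    (hJ : ∀ j, 1 ≤ j → j < n → (n + j + 1 ∈ J ↔ w (j + 1) ≠ w j))
    (f1 : f 1 = n + 1)
    (fs : ∀ i, 1 < i → i ≤ n → (n + 0 < f i ∧ f i ∈ J ∧ w (f i - n) = i - 1) ∨
      (f i = i - 1 ∧ ∀ j, n + j ∈ J → w j ≠ i - 1))
    (fb : ∀ j, 1 ≤ j → j < n → (n + j + 1 ∈ J → f (n + j) = w j) ∧
      (n + j + 1 ∉ J → f (n + j) = n + j + 1))
    (fl : f (2 * n) = w n) :
    Set.BijOn f (Set.Icc 1 (2 * n)) (Set.Icc 1 (2 * n)) ∧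
    ∃ σ : Equiv.Perm (Fin (2 * n)),
      (∀ x : Fin (2 * n), f ((σ x : ℕ) + 1) = (x : ℕ) + 1) ∧
      SatisfiesConds n hn σ := by
  have wle : ∀ j, 1 ≤ j → j ≤ n → w j ≤ n := fun j a b => w1 ▸ wanti 1 j le_rfl a b
  obtain ⟨c, hc⟩ : ∃ c : ℕ → ℕ, ∀ i, c i = ((Finset.Icc 1 n).filter (fun j => w j < i)).card :=
    ⟨_, fun _ => rfl⟩
  have cmono : ∀ i i', i ≤ i' → c i ≤ c i' := by
    intro i i' h
    rw [hc, hc]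
    apply Finset.card_le_card
    intro j hj
    simp only [Finset.mem_filter] at hj ⊢
    exact ⟨hj.1, by omega⟩
  have cge : ∀ i j, 1 ≤ j → j ≤ n → w j < i → n + 1 - j ≤ c i := by
    intro i j a b h
    rw [hc, ← Nat.card_Icc]
    apply Finset.card_le_card
    intro k hk
    simp only [Finset.mem_filter, Finset.mem_Icc] at hk ⊢
    have := wanti j k a hk.1 hk.2
    omega
  have cle : ∀ i j, 1 ≤ j → j ≤ n → i ≤ w j → c i ≤ n - j := by
    intro i j a b h
    have : n - j = n + 1 - (j + 1) := by omega
    rw [hc, this, ← Nat.card_Icc]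
    apply Finset.card_le_card
    intro k hk
    simp only [Finset.mem_filter, Finset.mem_Icc] at hk ⊢
    by_contra hcon
    have := wanti k j hk.1.1 (by omega) b
    omega
  obtain ⟨P, hPs, hPb⟩ : ∃ P : ℕ → ℕ, (∀ i, i ≤ n → P i = i - 1 + c i) ∧
      (∀ j, 1 ≤ j → P (n + j) = n - j + w j) := by
    refine ⟨fun x => if x ≤ n then x - 1 + c x else n - (x - n) + w (x - n), ?_, ?_⟩
    · intro i hi; simp [hi]
    · intro j hj
      have : ¬ (n + j ≤ n) := by omega
      simp only [this, if_false, Nat.add_sub_cancel_left]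
  have split : ∀ x, 1 ≤ x → x ≤ 2 * n → x ≤ n ∨ ∃ j, 1 ≤ j ∧ j ≤ n ∧ x = n + j := by
    intro x a b
    by_cases h : x ≤ n
    · exact Or.inl h
    · exact Or.inr ⟨x - n, by omega, by omega, by omega⟩
  have cmp : ∀ i j, 1 ≤ i → i ≤ n → 1 ≤ j → j ≤ n →
      (i ≤ w j ∧ P i < P (n + j)) ∨ (w j < i ∧ P (n + j) < P i) := by
    intro i j a b a' b'
    rw [hPs i b, hPb j a']
    rcases Nat.lt_or_ge (w j) i with h | h
    · have := cge i j a' b' h; omega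
    · have := cle i j a' b' h; omega
  have cn : ∀ i, i ≤ n → c i ≤ n - 1 := by
    intro i hi
    exact cle i 1 le_rfl hn (by omega)
  have hsm : ∀ x y, 1 ≤ x → x ≤ y → y ≤ n → P x ≤ P y ∧ (x < y → P x < P y) := by
    intro x y a b h
    rw [hPs x (by omega), hPs y h]
    have := cmono x y b
    omega
  have hbg : ∀ i j, 1 ≤ i → i ≤ j → j ≤ n → P (n + j) ≤ P (n + i) ∧
      (i < j → P (n + j) < P (n + i)) := by
    intro i j a b h
    rw [hPb i a, hPb j (by omega)]
    have := wanti i j a b h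
    omega
  have c0 : ∀ i, i ≤ w n → c i = 0 := by
    intro i hi
    have := cle i n hn le_rfl hi
    omega
  have wn := wge n hn le_rfl
  apply abs_core n hn f P
  · intro x a b
    rcases split x a b with h | ⟨j, h1, h2, rfl⟩
    · rw [hPs x h]; have := cn x h; omega
    · rw [hPb j h1]; have := wle j h1 h2; omega
  · intro x y a b a' b' hxy
    rcases split x a b with h | ⟨j, h1, h2, rfl⟩ <;>
      rcases split y a' b' with h' | ⟨j', h1', h2', rfl⟩
    · rcases Nat.lt_trichotomy x y with h3 | h3 | h3
      · have := (hsm x y a h3.le h').2 h3; omega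
      · exact h3
      · have := (hsm y x a' h3.le h).2 h3; omega
    · have := cmp x j' a h h1' h2'; omega
    · have := cmp y j a' h' h1 h2; omega
    · rcases Nat.lt_trichotomy j j' with h3 | h3 | h3
      · have := (hbg j j' h1 h3.le h2').2 h3; omega
      · rw [h3]
      · have := (hbg j' j h1' h3.le h2).2 h3; omega
  · intro x a b
    rcases split x a b with h | ⟨j, h1, h2, rfl⟩
    · by_cases hx : x = 1
      · subst hx; omega
      · rcases fs x (by omega) h with ⟨h3, h4, h5⟩ | ⟨h3, h4⟩
        · have := hJr _ h4; omega
        · omega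
    · by_cases hj : j = n
      · subst hj
        have := wle j h1 h2
        rw [show j + j = 2 * j by omega, fl]; omega
      · have h3 := wle j h1 h2
        have h4 := wge j h1 h2
        have h5 := fb j h1 (by omega)
        by_cases h6 : n + j + 1 ∈ J
        · rw [h5.1 h6]; omega
        · rw [h5.2 h6]; omega
  · rw [hPs 1 hn, c0 1 (by omega)]
  · rw [f1, hPb 1 le_rfl, w1]; omega
  · intro x a b
    rcases split x (by omega) b with h | ⟨j, h1, h2, rfl⟩
    · rcases fs x a h with ⟨h3, h4, h5⟩ | ⟨h3, h4⟩
      · obtain ⟨j, hj⟩ : ∃ j, f x = n + j := ⟨f x - n, by omega⟩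
        have h6 := hJr _ h4
        rw [hj] at h3 h4 h5 h6 ⊢
        rw [Nat.add_sub_cancel_left] at h5
        have hj1 : j ≠ 1 := by rintro rfl; omega
        obtain ⟨k, rfl⟩ : ∃ k, j = k + 1 := ⟨j - 1, by omega⟩
        have h7 := (hJ k (by omega) (by omega)).1 (by rwa [add_assoc])
        have h8 := wanti k (k + 1) (by omega) (by omega) (by omega)
        have h9 := cge x (k + 1) (by omega) (by omega) (by omega)
        have h10 := cle x k (by omega) (by omega) (by omega)
        rw [hPb _ (by omega), hPs x h]
        omega
      · rw [h3, hPs x h, hPs (x - 1) (by omega)]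
        have hno : ∀ j, 1 ≤ j → j ≤ n → w j ≠ x - 1 := by
          intro j
          induction j with
          | zero => intro h; omega
          | succ k ih =>
            intro _ hk
            by_cases hk0 : k = 0
            · subst hk0; simp only [zero_add]; omega
            · have h5 := ih (by omega) (by omega)
              by_cases h6 : n + k + 1 ∈ J
              · exact h4 (k + 1) h6
              · have := (hJ k (by omega) (by omega)).not.1 h6
                omega
        have : c (x - 1) = c x := by
          rw [hc, hc]
          congr 1
          apply Finset.filter_congr
          intro j hj
          rw [Finset.mem_Icc] at hj
          have := hno j hj.1 hj.2
          omega
        omega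
    · have h4 := wge j h1 h2
      have h4' := wle j h1 h2
      by_cases hj : j = n
      · subst hj
        rw [hPb _ h1, show j + j = 2 * j by omega, fl, hPs _ h4', c0 _ le_rfl]; omega
      · have h5 := fb j h1 (by omega)
        have h7 := hJ j h1 (by omega)
        by_cases h6 : n + j + 1 ∈ J
        · rw [h5.1 h6, hPb _ h1, hPs _ h4']
          have h8 := h7.1 h6
          have h9 := wanti j (j + 1) h1 (by omega) (by omega)
          have h10 := cge (w j) (j + 1) (by omega) (by omega) (by omega)
          have h11 := cle (w j) j (by omega) (by omega) le_rfl
          omega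
        · have h8 := h7.not.1 h6
          rw [h5.2 h6, hPb _ h1, add_assoc, hPb _ (by omega)]
          omega
  · intro x y a b h
    exact (hsm x y a b h).1
  · intro x y a b h
    have := (hbg (x - n) (y - n) (by omega) (by omega) (by omega)).1
    rwa [show n + (x - n) = x by omega, show n + (y - n) = y by omega] at this
  · intro x a b
    obtain ⟨j, rfl⟩ : ∃ j, x = n + j := ⟨x - n, by omega⟩
    have := wge j (by omega) (by omega)
    have := cmp (2 * n + 1 - (n + j)) j (by omega) (by omega) (by omega) (by omega)
    omega

theorem colB_eq {n : ℕ} (A : Matrix (Fin n) (Fin n) ℝ) (j : ℕ) (h1 : 1 ≤ j) (h2 : j ≤ n)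
    (r : Fin n) :
    colB A (n + j) r = (-1 : ℝ) ^ (n - 1 - (r : ℕ)) * A (Fin.rev r) ⟨j - 1, by omega⟩ := by
  unfold colB psiMat
  rw [dif_pos (by omega)]
  simp only [Matrix.of_apply]
  rw [dif_neg (by omega)]
  congr 2
  · ext; simp only [Fin.val_rev]; omega
  · ext; simp only; omega

theorem piA_perm_and_inverse_satisfiesConds
    {n : ℕ} (hn : 0 < n) (A : Matrix (Fin n) (Fin n) ℝ) (hA : IsDyckMatrix A) :
    Set.BijOn (piA A) (Set.Icc 1 (2 * n)) (Set.Icc 1 (2 * n)) ∧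
    ∃ σ : Equiv.Perm (Fin (2 * n)),
      (∀ x : Fin (2 * n), piA A ((σ x : ℕ) + 1) = (x : ℕ) + 1) ∧
      SatisfiesConds n hn σ := by
  classical
  obtain ⟨hA1, hA2, hA3⟩ := hA
  let S : ℕ → Finset (Fin n) := fun j => Finset.univ.filter fun r : Fin n => colB A (n + j) r ≠ 0
  have hS : ∀ j, 1 ≤ j → omegaB A (n + j) = (S j).card := by
    intro j hj
    unfold omegaB
    rw [if_neg (by omega)]
  have memS : ∀ j (h1 : 1 ≤ j) (h2 : j ≤ n) r,
      r ∈ S j ↔ A (Fin.rev r) ⟨j - 1, by omega⟩ ≠ 0 := by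
    intro j h1 h2 r
    simp only [S, Finset.mem_filter, Finset.mem_univ, true_and]
    rw [colB_eq A j h1 h2]
    simp
  have Santi : ∀ i j, 1 ≤ i → i ≤ j → j ≤ n → S j ⊆ S i := by
    intro i j a b c r hr
    rw [memS j (by omega) c] at hr
    rw [memS i a (by omega)]
    intro h0
    exact hr (hA3 _ _ _ _ h0 le_rfl (by simp only; omega))
  have wge : ∀ j, 1 ≤ j → j ≤ n → n + 1 ≤ omegaB A (n + j) + j := by
    intro j a b
    rw [hS j a]
    have : (Finset.univ.map (Fin.castLEEmb (show n + 1 - j ≤ n by omega))) ⊆ S j := by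
      intro r hr
      simp only [Finset.mem_map, Finset.mem_univ, true_and] at hr
      obtain ⟨t, rfl⟩ := hr
      rw [memS j a b, hA2]
      · exact one_ne_zero
      · simp only [Fin.val_rev, Fin.castLEEmb_apply, Fin.val_castLE]; omega
    have := Finset.card_le_card this
    rw [Finset.card_map, Finset.card_univ, Fintype.card_fin] at this
    omega
  have wle : ∀ j, 1 ≤ j → omegaB A (n + j) ≤ n := by
    intro j a
    rw [hS j a]
    simpa using Finset.card_le_univ (S j)
  apply abs_w n hn (piA A) (fun j => omegaB A (n + j)) (JSet A)
  · have := wge 1 le_rfl hn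
    have := wle 1 le_rfl
    omega
  · intro i j a b c
    rw [hS i a, hS j (by omega)]
    exact Finset.card_le_card (Santi i j a b c)
  · exact wge
  · intro j hj
    exact ⟨hj.1, hj.2.1⟩
  · intro j a b
    rw [hS j a, hS (j + 1) (by omega)]
    unfold JSet
    simp only [Set.mem_ofPred_eq, Nat.add_sub_cancel]
    constructor
    · rintro ⟨_, _, h⟩ hc
      apply h
      have hs := Finset.eq_of_subset_of_card_le (Santi j (j + 1) a (by omega) (by omega)) hc.ge
      funext r
      rw [add_assoc, colB_eq A (j + 1) (by omega) (by omega), colB_eq A j a (by omega)]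
      have hm : r ∈ S (j + 1) ↔ r ∈ S j := by rw [hs]
      rw [memS _ (by omega) (by omega), memS _ a (by omega)] at hm
      congr 1
      rcases hA1 (Fin.rev r) ⟨j + 1 - 1, by omega⟩ with h1 | h1 <;>
        rcases hA1 (Fin.rev r) ⟨j - 1, by omega⟩ with h2 | h2 <;>
        rw [h1, h2] at hm ⊢ <;> simp at hm
    · intro h
      refine ⟨by omega, by omega, fun hc => h ?_⟩
      simp only [S]
      rw [← add_assoc, hc]
  · simp [piA]
  · intro i a b
    unfold piA
    rw [if_neg (by omega), if_pos b]
    by_cases h : ∃ j, j ∈ JSet A ∧ omegaB A j = i - 1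
    · left
      rw [dif_pos h]
      obtain ⟨h1, h2⟩ := h.choose_spec
      have h3 := h1.1
      refine ⟨by omega, h1, ?_⟩
      rw [show n + (h.choose - n) = h.choose by omega]
      exact h2
    · right
      rw [dif_neg h]
      exact ⟨rfl, fun j hj hw => h ⟨_, hj, hw⟩⟩
  · intro j a b
    unfold piA
    rw [if_neg (by omega), if_neg (by omega), if_pos (by omega)]
    exact ⟨fun h => if_pos h, fun h => if_neg h⟩
  · unfold piA
    rw [if_neg (by omega), if_neg (by omega), if_neg (by omega)]
    rw [two_mul]
end

section
/- For every positive integer n, the number of permutations of {1,…,2n} satisfying conditions (1)–(2) equals the n-th Catalan number (1/(n+1))·binom(2n, n); such permutations are in bijection with Dyck paths of length 2n. -/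
theorem cnt_aux (f : ℕ → DyckStep) (a : DyckStep) (k : ℕ) :
    ((List.range k).map f).count a = Nat.count (fun t => f t = a) k := by
  induction k with
  | zero => simp
  | succ k ih =>
    rw [List.range_succ, List.map_append, List.count_append, ih, Nat.count_succ]
    simp [List.count_singleton]

theorem count_eq_aux (P : ℕ → Prop) [DecidablePred P] (g : ℕ → ℕ) (k N : ℕ)
    (h1 : ∀ v < N, ∃ t < k, P t ∧ g t = v) (h2 : ∀ t < k, P t → g t < N)
    (h3 : ∀ s t, s < t → t < k → P s → P t → g s < g t) : Nat.count P k = N := by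
  rw [Nat.count_eq_card_filter_range, ← Finset.card_range N]
  apply Finset.card_bij (fun t _ => g t)
  · intro t ht
    simp only [Finset.mem_filter, Finset.mem_range] at ht ⊢
    exact h2 t ht.1 ht.2
  · intro s hs t ht e
    simp only [Finset.mem_filter, Finset.mem_range] at hs ht
    rcases lt_trichotomy s t with h | h | h
    · have := h3 s t h ht.1 hs.2 ht.2; omega
    · exact h
    · have := h3 t s h hs.1 ht.2 hs.2; omega
  · intro v hv
    obtain ⟨t, a, b, c⟩ := h1 v (Finset.mem_range.1 hv)
    exact ⟨t, by simp [a, b], c⟩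

/-- the data of conditions, on sequences -/
structure GoodSeq (n : ℕ) (s : ℕ → ℕ) : Prop where
  lt : ∀ k, s k < 2 * n
  zero : s 0 = 0
  surj : ∀ v < 2 * n, ∃ k < 2 * n, s k = v
  inc : ∀ k l : ℕ, k < l → l < 2 * n → s k < n → s l < n → s k < s l
  dec : ∀ k l : ℕ, k < l → l < 2 * n → n ≤ s k → n ≤ s l → s l < s k
  pre : ∀ k, k ≤ 2 * n → Nat.count (fun t => n ≤ s t) k ≤ Nat.count (fun t => s t < n) k

theorem GoodSeq.inj {n : ℕ} {s : ℕ → ℕ} (h : GoodSeq n s) {k l : ℕ} (hk : k < 2 * n)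
    (hl : l < 2 * n) (e : s k = s l) : k = l := by
  rcases lt_trichotomy k l with g | g | g
  · have := h.inc k l g hl; have := h.dec k l g hl; omega
  · exact g
  · have := h.inc l k g hk; have := h.dec l k g hk; omega

theorem GoodSeq.low {n : ℕ} {s : ℕ → ℕ} (h : GoodSeq n s) {k : ℕ} (hk : k < 2 * n)
    (hs : s k < n) : s k = Nat.count (fun t => s t < n) k := by
  symm
  apply count_eq_aux _ s
  · intro v hv
    obtain ⟨t, ht, e⟩ := h.surj v (by omega)
    refine ⟨t, ?_, by omega, e⟩
    rcases lt_trichotomy k t with g | g | g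
    · have := h.inc k t g ht; omega
    · subst g; omega
    · exact g
  · intro t ht hp
    exact h.inc t k ht hk hp hs
  · intro a b hab hb pa pb
    exact h.inc a b hab (by omega) pa pb

theorem GoodSeq.high {n : ℕ} {s : ℕ → ℕ} (h : GoodSeq n s) {k : ℕ} (hk : k < 2 * n)
    (hs : n ≤ s k) : s k = 2 * n - 1 - Nat.count (fun t => n ≤ s t) k := by
  have key : Nat.count (fun t => n ≤ s t) k = 2 * n - 1 - s k := by
    apply count_eq_aux _ (fun t => 2 * n - 1 - s t)
    · intro v hv
      obtain ⟨t, ht, e⟩ := h.surj (2 * n - 1 - v) (by omega)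
      refine ⟨t, ?_, by omega, by omega⟩
      rcases lt_trichotomy k t with g | g | g
      · have := h.dec k t g ht; omega
      · subst g; omega
      · exact g
    · intro t ht hp
      have := h.dec t k ht hk hp hs
      have := h.lt t
      omega
    · intro a b hab hb pa pb
      have := h.dec a b hab (by omega) pa pb
      have := h.lt a
      have := h.lt b
      omega
  have := h.lt k
  omega

theorem GoodSeq.countLow {n : ℕ} {s : ℕ → ℕ} (h : GoodSeq n s) :
    Nat.count (fun t => s t < n) (2 * n) = n := by
  apply count_eq_aux _ s
  · intro v hv
    obtain ⟨t, ht, e⟩ := h.surj v (by omega)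
    exact ⟨t, ht, by omega, e⟩
  · intro t ht hp; exact hp
  · intro a b hab hb pa pb
    exact h.inc a b hab (by omega) pa pb

theorem GoodSeq.countHigh {n : ℕ} {s : ℕ → ℕ} (h : GoodSeq n s) :
    Nat.count (fun t => n ≤ s t) (2 * n) = n := by
  apply count_eq_aux _ (fun t => 2 * n - 1 - s t)
  · intro v hv
    obtain ⟨t, ht, e⟩ := h.surj (2 * n - 1 - v) (by omega)
    exact ⟨t, ht, by omega, by omega⟩
  · intro t ht hp
    have := h.lt t
    omega
  · intro a b hab hb pa pb
    have := h.dec a b hab (by omega) pa pb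
    have := h.lt a
    omega

/-- orbit sequence -/
def orb (n : ℕ) (hn : 0 < n) (σ : Equiv.Perm (Fin (2 * n))) (k : ℕ) : ℕ :=
  ((σ ^ k) ⟨0, by omega⟩ : Fin (2 * n))

theorem satisfiesConds_iff (n : ℕ) (hn : 0 < n) (σ : Equiv.Perm (Fin (2 * n))) :
    SatisfiesConds n hn σ ↔ GoodSeq n (orb n hn σ) := by
  have h0 : orb n hn σ 0 = 0 := rfl
  constructor
  · intro h
    obtain ⟨a, b, c, d⟩ := h _ rfl
    refine ⟨fun k => Fin.isLt _, h0, ?_, b, c, ?_⟩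
    · intro v hv
      obtain ⟨k, hk, e⟩ := a ⟨v, hv⟩
      exact ⟨k, hk, congrArg Fin.val e⟩
    · intro k hk
      rcases k with _ | _ | k
      · simp
      · simp only [Nat.count_succ, h0]
        simp [hn, hn.ne']
      · have := d (k + 1) (by omega) (by omega)
        rw [← Nat.count_eq_card_filter_range, ← Nat.count_eq_card_filter_range] at this
        exact this
  · rintro h one rfl
    refine ⟨?_, h.inc, h.dec, ?_⟩
    · intro m
      obtain ⟨k, hk, e⟩ := h.surj m m.2
      exact ⟨k, hk, Fin.ext e⟩
    · intro k h1 h2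
      rw [← Nat.count_eq_card_filter_range, ← Nat.count_eq_card_filter_range]
      exact h.pre (k + 1) (by omega)

/-- steps of the word -/
def stp (n : ℕ) (s : ℕ → ℕ) (k : ℕ) : DyckStep := if s k < n then .U else .D

theorem stp_U (n : ℕ) (s : ℕ → ℕ) : (fun t => stp n s t = .U) = (fun t => s t < n) := by
  funext t; unfold stp; split_ifs <;> simp_all

theorem stp_D (n : ℕ) (s : ℕ → ℕ) : (fun t => stp n s t = .D) = (fun t => n ≤ s t) := by
  funext t; unfold stp; split_ifs <;> simp_all

theorem cntU (n : ℕ) (s : ℕ → ℕ) (k : ℕ) : ((List.range k).map (stp n s)).count .U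
    = Nat.count (fun t => s t < n) k := by
  rw [cnt_aux]; simp only [← stp_U]

theorem cntD (n : ℕ) (s : ℕ → ℕ) (k : ℕ) : ((List.range k).map (stp n s)).count .D
    = Nat.count (fun t => n ≤ s t) k := by
  rw [cnt_aux]; simp only [← stp_D]

/-- the Dyck word -/
def toWord (n : ℕ) (s : ℕ → ℕ) (h : GoodSeq n s) : DyckWord where
  toList := (List.range (2 * n)).map (stp n s)
  count_U_eq_count_D := by rw [cntU, cntD, h.countLow, h.countHigh]
  count_D_le_count_U := by
    intro i
    rw [← List.map_take, List.take_range, cntU, cntD]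
    exact h.pre _ (by omega)

theorem orb_inj (n : ℕ) (hn : 0 < n) (σ τ : Equiv.Perm (Fin (2 * n)))
    (hσ : GoodSeq n (orb n hn σ)) (e : ∀ k < 2 * n, orb n hn σ k = orb n hn τ k)
    (hτ : GoodSeq n (orb n hn τ)) : σ = τ := by
  have per : ∀ ρ : Equiv.Perm (Fin (2 * n)), GoodSeq n (orb n hn ρ) → orb n hn ρ (2 * n) = 0 := by
    intro ρ h
    obtain ⟨j, hj, ej⟩ := h.surj _ (h.lt (2 * n))
    rcases j with _ | j
    · rw [← ej]; rfl
    · exfalso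
      obtain ⟨m, hm⟩ : ∃ m, 2 * n = m + 1 := ⟨2 * n - 1, by omega⟩
      have e1 : (ρ ^ (j + 1)) ⟨0, by omega⟩ = (ρ ^ (m + 1)) (⟨0, by omega⟩ : Fin (2 * n)) := by
        apply Fin.ext
        have := ej
        rw [hm] at this
        exact this
      rw [pow_succ', pow_succ', Equiv.Perm.mul_apply, Equiv.Perm.mul_apply] at e1
      have e2 := congrArg Fin.val (ρ.injective e1)
      have := h.inj (k := j) (l := m) (by omega) (by omega) e2
      omega
  have e' : ∀ k ≤ 2 * n, orb n hn σ k = orb n hn τ k := by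
    intro k hk
    rcases hk.lt_or_eq with h | h
    · exact e k h
    · rw [h, per σ hσ, per τ hτ]
  ext x
  obtain ⟨k, hk, ek⟩ := hσ.surj x x.2
  have a : x = (σ ^ k) ⟨0, by omega⟩ := (Fin.ext ek).symm
  have b : x = (τ ^ k) ⟨0, by omega⟩ := (Fin.ext ((e k hk).symm.trans ek)).symm
  have := e' (k + 1) hk
  unfold orb at this
  rw [pow_succ', pow_succ', Equiv.Perm.mul_apply, Equiv.Perm.mul_apply, ← a, ← b] at this
  exact this

/-- value sequence of a step sequence -/
def vals (n : ℕ) (f : ℕ → DyckStep) (k : ℕ) : ℕ :=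
  if f k = .U then Nat.count (fun t => f t = .U) k
  else 2 * n - 1 - Nat.count (fun t => f t = .D) k

theorem word_eq (w : DyckWord) :
    w.toList = (List.range w.toList.length).map (fun k => w.toList.getD k .D) := by
  apply List.ext_getElem
  · simp
  · intro i h1 h2
    simp [h1]

theorem exists_perm (n : ℕ) (hn : 0 < n) (w : DyckWord) (hw : w.semilength = n) :
    ∃ σ : Equiv.Perm (Fin (2 * n)), ∃ h : GoodSeq n (orb n hn σ),
      toWord n (orb n hn σ) h = w := by
  obtain ⟨f, hf⟩ : ∃ f : ℕ → DyckStep, w.toList = (List.range (2 * n)).map f := by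
    refine ⟨fun k => w.toList.getD k .D, ?_⟩
    rw [← hw, w.two_mul_semilength_eq_length]
    exact word_eq w
  have cU : Nat.count (fun t => f t = .U) (2 * n) = n := by
    rw [← cnt_aux, ← hf]; exact hw
  have cD : Nat.count (fun t => f t = .D) (2 * n) = n := by
    rw [← cnt_aux, ← hf, ← w.semilength_eq_count_D]; exact hw
  have pre : ∀ k ≤ 2 * n, Nat.count (fun t => f t = .D) k ≤ Nat.count (fun t => f t = .U) k := by
    intro k hk
    have := w.count_D_le_count_U k
    rw [hf, ← List.map_take, List.take_range, min_eq_left hk, cnt_aux, cnt_aux] at this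
    exact this
  have ltU : ∀ k l, k < l → f k = .U →
      Nat.count (fun t => f t = .U) k < Nat.count (fun t => f t = .U) l := by
    intro k l hkl h
    exact Nat.count_strict_mono (p := fun t => f t = .U) h hkl
  have ltD : ∀ k l, k < l → f k = .D →
      Nat.count (fun t => f t = .D) k < Nat.count (fun t => f t = .D) l := by
    intro k l hkl h
    exact Nat.count_strict_mono (p := fun t => f t = .D) h hkl
  have vU : ∀ k, f k = .U → vals n f k = Nat.count (fun t => f t = .U) k := by
    intro k h; simp [vals, h]
  have vD : ∀ k, f k = .D → vals n f k = 2 * n - 1 - Nat.count (fun t => f t = .D) k := by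
    intro k h; simp [vals, h]
  have bU : ∀ k < 2 * n, f k = .U → vals n f k < n := by
    intro k hk h
    have := ltU k _ hk h
    rw [vU k h]; omega
  have bD : ∀ k < 2 * n, f k = .D → n ≤ vals n f k ∧ vals n f k < 2 * n ∧
      Nat.count (fun t => f t = .D) k < n := by
    intro k hk h
    have := ltD k _ hk h
    rw [vD k h]; omega
  have lowU : ∀ k < 2 * n, (vals n f k < n ↔ f k = .U) := by
    intro k hk
    rcases DyckStep.dichotomy (f k) with h | h
    · simp [h, bU k hk h]
    · have := bD k hk h
      simp [h, this.1]
  have highD : ∀ k < 2 * n, (n ≤ vals n f k ↔ f k = .D) := by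
    intro k hk
    rcases DyckStep.dichotomy (f k) with h | h
    · simp [h, bU k hk h]
    · have := bD k hk h
      simp [h, this.1]
  have lt : ∀ k < 2 * n, vals n f k < 2 * n := by
    intro k hk
    rcases DyckStep.dichotomy (f k) with h | h
    · have := bU k hk h; omega
    · exact (bD k hk h).2.1
  have inc : ∀ k l : ℕ, k < l → l < 2 * n → vals n f k < n → vals n f l < n →
      vals n f k < vals n f l := by
    intro k l hkl hl h1 h2
    rw [lowU k (by omega)] at h1
    rw [lowU l hl] at h2
    rw [vU k h1, vU l h2]
    exact ltU k l hkl h1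
  have dec : ∀ k l : ℕ, k < l → l < 2 * n → n ≤ vals n f k → n ≤ vals n f l →
      vals n f l < vals n f k := by
    intro k l hkl hl h1 h2
    rw [highD k (by omega)] at h1
    rw [highD l hl] at h2
    have := ltD k l hkl h1
    have := (bD l hl h2).2.2
    rw [vD k h1, vD l h2]
    omega
  let g : Fin (2 * n) → Fin (2 * n) := fun k => ⟨vals n f k, lt k k.2⟩
  have gi : Function.Injective g := by
    intro a b hab
    have e : vals n f a = vals n f b := congrArg Fin.val hab
    rcases lt_trichotomy a.1 b.1 with h | h | h
    · have := inc a b h b.2; have := dec a b h b.2; omega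
    · exact Fin.ext h
    · have := inc b a h a.2; have := dec b a h a.2; omega
  let e : Equiv.Perm (Fin (2 * n)) := Equiv.ofBijective g (Finite.injective_iff_bijective.1 gi)
  have f0 : f 0 = .U := by
    have := pre 1 (by omega)
    rcases DyckStep.dichotomy (f 0) with h | h
    · exact h
    · simp [Nat.count_succ, h] at this
  have v0 : vals n f 0 = 0 := by rw [vU 0 f0]; simp
  have e0 : e ⟨0, by omega⟩ = ⟨0, by omega⟩ := Fin.ext v0
  let σ : Equiv.Perm (Fin (2 * n)) := e * finRotate (2 * n) * e⁻¹
  have ho : ∀ k < 2 * n, orb n hn σ k = vals n f k := by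
    intro k hk
    have : (σ ^ k) ⟨0, by omega⟩ = e ⟨k, hk⟩ := by
      induction k with
      | zero => simp [e0]
      | succ k ih =>
        rw [pow_succ', Equiv.Perm.mul_apply, ih (by omega)]
        simp only [σ, Equiv.Perm.mul_apply]
        rw [show e⁻¹ (e ⟨k, by omega⟩) = ⟨k, by omega⟩ from e.symm_apply_apply _]
        congr 1
        obtain ⟨m, hm⟩ : ∃ m, 2 * n = m + 1 := ⟨2 * n - 1, by omega⟩
        have : ∀ N (hN : N = m + 1) (h1 : k < N) (h2 : k + 1 < N),
            finRotate N ⟨k, h1⟩ = ⟨k + 1, h2⟩ := by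
          rintro N rfl h1 h2
          exact finRotate_of_lt (by omega)
        exact this _ hm _ _
    exact congrArg Fin.val this
  have cc : ∀ (p q : ℕ → Prop) [DecidablePred p] [DecidablePred q] (k : ℕ),
      (∀ t < k, (p t ↔ q t)) → Nat.count p k = Nat.count q k := by
    intro p q _ _ k h
    rw [Nat.count_eq_card_filter_range, Nat.count_eq_card_filter_range]
    congr 1
    apply Finset.filter_congr
    intro t ht
    exact h t (Finset.mem_range.1 ht)
  have good : GoodSeq n (orb n hn σ) := by
    refine ⟨fun k => Fin.isLt _, rfl, ?_, ?_, ?_, ?_⟩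
    · intro v hv
      obtain ⟨k, hk⟩ := e.surjective ⟨v, hv⟩
      exact ⟨k, k.2, (ho k k.2).trans (congrArg Fin.val hk)⟩
    · intro k l hkl hl
      rw [ho k (by omega), ho l hl]; exact inc k l hkl hl
    · intro k l hkl hl
      rw [ho k (by omega), ho l hl]; exact dec k l hkl hl
    · intro k hk
      rw [cc _ (fun t => f t = .D) k, cc (fun t => orb n hn σ t < n) (fun t => f t = .U) k]
      · exact pre k hk
      · intro t ht
        rw [ho t (by omega)]; exact lowU t (by omega)
      · intro t ht
        rw [ho t (by omega)]; exact highD t (by omega)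
  refine ⟨σ, good, ?_⟩
  apply DyckWord.ext
  rw [hf]
  apply List.map_congr_left
  intro t ht
  have ht := List.mem_range.1 ht
  have := lowU t ht
  unfold stp
  rw [ho t ht]
  rcases DyckStep.dichotomy (f t) with h | h <;> simp_all

/-- the map -/
def theMap (n : ℕ) (hn : 0 < n) (σ : {σ : Equiv.Perm (Fin (2 * n)) // SatisfiesConds n hn σ}) :
    {w : DyckWord // w.semilength = n} :=
  ⟨toWord n (orb n hn σ.1) ((satisfiesConds_iff n hn σ.1).1 σ.2), by
    have h := (satisfiesConds_iff n hn σ.1).1 σ.2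
    unfold DyckWord.semilength toWord
    simp only [cntU]
    exact h.countLow⟩

theorem theMap_bij (n : ℕ) (hn : 0 < n) : Function.Bijective (theMap n hn) := by
  constructor
  · rintro ⟨σ, hσ⟩ ⟨τ, hτ⟩ e
    have gσ := (satisfiesConds_iff n hn σ).1 hσ
    have gτ := (satisfiesConds_iff n hn τ).1 hτ
    have e1 : (List.range (2 * n)).map (stp n (orb n hn σ)) =
        (List.range (2 * n)).map (stp n (orb n hn τ)) :=
      congrArg (fun w => w.1.toList) e
    have e2 : ∀ t < 2 * n, stp n (orb n hn σ) t = stp n (orb n hn τ) t := by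
      intro t ht
      exact List.map_inj_left.1 e1 t (List.mem_range.2 ht)
    have cnt : ∀ a, ∀ k ≤ 2 * n, ((List.range k).map (stp n (orb n hn σ))).count a =
        ((List.range k).map (stp n (orb n hn τ))).count a := by
      intro a k hk
      congr 1
      apply List.map_congr_left
      intro t ht
      exact e2 t (by have := List.mem_range.1 ht; omega)
    apply Subtype.ext
    refine orb_inj n hn σ τ gσ ?_ gτ
    intro k hk
    have h := e2 k hk
    have hU := cnt .U k hk.le
    have hD := cnt .D k hk.le
    rw [cntU, cntU] at hU
    rw [cntD, cntD] at hD
    unfold stp at h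
    by_cases c1 : orb n hn σ k < n <;> by_cases c2 : orb n hn τ k < n
    · rw [gσ.low hk c1, gτ.low hk c2, hU]
    · simp [c1, c2] at h
    · simp [c1, c2] at h
    · rw [gσ.high hk (by omega), gτ.high hk (by omega), hD]
  · rintro ⟨w, hw⟩
    obtain ⟨σ, h, e⟩ := exists_perm n hn w hw
    exact ⟨⟨σ, (satisfiesConds_iff n hn σ).2 h⟩, Subtype.ext e⟩

/-- The number of permutations of `{1,…,2n}` satisfying conditions (1)–(2) is the `n`-th
Catalan number `(1/(n+1))·C(2n,n)`, and such permutations are in bijection with Dyck paths of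
length `2n` (Dyck words of semilength `n`). -/
theorem card_satisfiesConds_eq_catalan (n : ℕ) (hn : 0 < n) :
    Nat.card {σ : Equiv.Perm (Fin (2 * n)) // SatisfiesConds n hn σ} =
      Nat.choose (2 * n) n / (n + 1) ∧
    Nonempty ({σ : Equiv.Perm (Fin (2 * n)) // SatisfiesConds n hn σ} ≃
      {w : DyckWord // w.semilength = n}) := by
  have E := Equiv.ofBijective _ (theMap_bij n hn)
  refine ⟨?_, ⟨E⟩⟩
  rw [Nat.card_congr E, Nat.card_eq_fintype_card, DyckWord.card_dyckWord_semilength_eq_catalan,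
    catalan_eq_centralBinom_div, Nat.centralBinom]
end

section
/- The map A ↦ π_A^{-1} is a bijection from the set of n × n Dyck matrices onto the set of permutations of {1,…,2n} satisfying conditions (1)–(2). -/
noncomputable def hA {n : ℕ} (A : Matrix (Fin n) (Fin n) ℝ) (j : ℕ) : ℕ := omegaB A (n + 1 + j)

def GoodH (n : ℕ) (h : ℕ → ℕ) : Prop :=
  (∀ j, j < n → n ≤ h j + j ∧ h j ≤ n) ∧ ∀ i j, i ≤ j → j < n → h j ≤ h i

def posP (n : ℕ) (h : ℕ → ℕ) (x : ℕ) : ℕ :=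
  if x < n then x + ((Finset.range n).filter (fun j => h j ≤ x)).card
  else h (x - n) + (2 * n - 1 - x)

theorem lower_fin {n : ℕ} (P : Fin n → Prop) [DecidablePred P]
    (hP : ∀ a b : Fin n, a ≤ b → P b → P a) (r : Fin n) :
    P r ↔ (r : ℕ) < (Finset.univ.filter P).card := by
  constructor
  · intro h
    have : Finset.Iic r ⊆ Finset.univ.filter P := by
      intro a ha
      simp only [Finset.mem_Iic] at ha
      simp only [Finset.mem_filter, Finset.mem_univ, true_and]
      exact hP a r ha h
    have := Finset.card_le_card this
    rw [Fin.card_Iic] at this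
    omega
  · intro h
    by_contra hr
    have : Finset.univ.filter P ⊆ Finset.Iio r := by
      intro a ha
      simp only [Finset.mem_filter, Finset.mem_univ, true_and] at ha
      simp only [Finset.mem_Iio]
      by_contra hc
      exact hr (hP r a (not_lt.mp hc) ha)
    have := Finset.card_le_card this
    rw [Fin.card_Iio] at this
    omega

theorem lower_nat {n : ℕ} (P : ℕ → Prop) [DecidablePred P]
    (hP : ∀ a b : ℕ, a ≤ b → b < n → P b → P a) (r : ℕ) (hr : r < n) :
    P r ↔ r < ((Finset.range n).filter P).card := by
  constructor
  · intro h
    have : Finset.range (r+1) ⊆ (Finset.range n).filter P := by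
      intro a ha
      simp only [Finset.mem_range] at ha
      simp only [Finset.mem_filter, Finset.mem_range]
      exact ⟨by omega, hP a r (by omega) hr h⟩
    have := Finset.card_le_card this
    rw [Finset.card_range] at this
    omega
  · intro h
    by_contra hr
    have : (Finset.range n).filter P ⊆ Finset.range r := by
      intro a ha
      simp only [Finset.mem_filter, Finset.mem_range] at ha
      simp only [Finset.mem_range]
      by_contra hc
      exact hr (hP r a (not_lt.mp hc) ha.1 ha.2)
    have := Finset.card_le_card this
    rw [Finset.card_range] at this
    omega

theorem colB_big {n : ℕ} (A : Matrix (Fin n) (Fin n) ℝ) (j : ℕ) (hj : j < n) (r : Fin n) :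
    colB A (n + 1 + j) r = (-1 : ℝ) ^ (n - 1 - (r : ℕ)) *
      A ⟨n - 1 - (r : ℕ), by have := r.isLt; omega⟩ ⟨j, hj⟩ := by
  unfold colB psiMat
  have h1 : n + 1 + j - 1 < 2 * n := by omega
  have h2 : ¬ (n + 1 + j - 1 < n) := by omega
  have h3 : n + 1 + j - 1 - n = j := by omega
  rw [dif_pos h1]
  simp only [Matrix.of_apply, h3]
  rw [dif_neg h2]

theorem hA_spec {n : ℕ} (A : Matrix (Fin n) (Fin n) ℝ) (hD : IsDyckMatrix A) (j : ℕ) (hj : j < n)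
    (r : Fin n) : A ⟨n - 1 - (r : ℕ), by have := r.isLt; omega⟩ ⟨j, hj⟩ ≠ 0 ↔ (r : ℕ) < hA A j := by
  classical
  unfold hA omegaB
  rw [if_neg (by omega)]
  have key : ∀ r : Fin n, colB A (n + 1 + j) r ≠ 0 ↔
      A ⟨n - 1 - (r : ℕ), by have := r.isLt; omega⟩ ⟨j, hj⟩ ≠ 0 := by
    intro r
    rw [colB_big A j hj]
    simp
  rw [← key]
  have := lower_fin (fun r : Fin n => colB A (n + 1 + j) r ≠ 0) (by
    intro a b hab hb
    rw [key] at hb ⊢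
    intro h0
    apply hb
    refine hD.2.2 _ _ _ _ h0 ?_ le_rfl
    have : (a : ℕ) ≤ b := hab
    simp only
    omega) r
  convert this

theorem A_eq {n : ℕ} (A : Matrix (Fin n) (Fin n) ℝ) (hD : IsDyckMatrix A) (i j : Fin n) :
    A i j = if n ≤ (i : ℕ) + hA A j then 1 else 0 := by
  have h := hA_spec A hD j j.isLt ⟨n - 1 - (i : ℕ), by have := i.isLt; omega⟩
  have e : (⟨n - 1 - (n - 1 - (i : ℕ)), by have := i.isLt; omega⟩ : Fin n) = i := by
    ext; simp only; have := i.isLt; omega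
  simp only [e] at h
  have hi := i.isLt
  split_ifs with hc
  · rcases hD.1 i j with h0 | h1
    · exact absurd h0 (h.2 (by omega))
    · exact h1
  · by_contra h0
    have := h.1 h0
    omega

theorem hA_good {n : ℕ} (A : Matrix (Fin n) (Fin n) ℝ) (hD : IsDyckMatrix A) : GoodH n (hA A) := by
  classical
  have hle : ∀ j, hA A j ≤ n := by
    intro j
    unfold hA omegaB
    rw [if_neg (by omega)]
    exact (Finset.card_le_univ _).trans (by simp)
  have hlo : ∀ j, j < n → n ≤ hA A j + j := by
    intro j hj
    have h1 := A_eq A hD ⟨j, hj⟩ ⟨j, hj⟩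
    rw [hD.2.1 _ _ le_rfl] at h1
    split_ifs at h1 with hc
    · simp only at hc; omega
    · norm_num at h1
  refine ⟨fun j hj => ⟨hlo j hj, hle j⟩, ?_⟩
  intro i j hij hj
  by_contra hc
  have := hle j
  have := hlo i (by omega)
  have h1 := A_eq A hD ⟨n - hA A j, by omega⟩ ⟨i, by omega⟩
  have h2 := A_eq A hD ⟨n - hA A j, by omega⟩ ⟨j, hj⟩
  rw [if_neg (by simp only; omega)] at h1
  rw [if_pos (by simp only; omega)] at h2
  have := hD.2.2 _ _ ⟨n - hA A j, by omega⟩ ⟨j, hj⟩ h1 le_rfl hij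
  rw [this] at h2
  norm_num at h2

theorem exists_A {n : ℕ} (h : ℕ → ℕ) (hg : GoodH n h) :
    ∃ A : Matrix (Fin n) (Fin n) ℝ, IsDyckMatrix A ∧ ∀ j, j < n → hA A j = h j := by
  let A : Matrix (Fin n) (Fin n) ℝ := Matrix.of fun i j => if n ≤ (i : ℕ) + h j then 1 else 0
  have hAd : ∀ i j, A i j = if n ≤ (i : ℕ) + h j then 1 else 0 := fun i j => rfl
  have hD : IsDyckMatrix A := by
    refine ⟨?_, ?_, ?_⟩
    · intro i j
      rw [hAd]; split_ifs <;> simp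
    · intro i j hij
      rw [hAd, if_pos]
      have := (hg.1 j j.isLt).1
      omega
    · intro i j i' j' h0 hi hj
      rw [hAd] at h0 ⊢
      have := hg.2 j j' hj j'.isLt
      split_ifs at h0 with hc
      · norm_num at h0
      · rw [if_neg (by omega)]
  refine ⟨A, hD, ?_⟩
  have key : ∀ i j, i < n → j < n → (n ≤ i + hA A j ↔ n ≤ i + h j) := by
    intro i j hi hj
    have h1 := A_eq A hD ⟨i, hi⟩ ⟨j, hj⟩
    rw [hAd] at h1
    simp only at h1
    split_ifs at h1 with a b b
    · tauto
    · norm_num at h1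
    · norm_num at h1
    · tauto
  intro j hj
  have h1 := (hA_good A hD).1 j hj
  have h2 := hg.1 j hj
  have k1 := key (n - hA A j) j (by omega) hj
  have k2 := key (n - h j) j (by omega) hj
  omega

theorem posP_congr {n : ℕ} {h h' : ℕ → ℕ} (e : ∀ j, j < n → h j = h' j) (x : ℕ) (hx : x < 2 * n) :
    posP n h x = posP n h' x := by
  unfold posP
  split_ifs with hc
  · congr 2
    apply Finset.filter_congr
    intro j hj
    rw [e j (Finset.mem_range.1 hj)]
  · rw [e _ (by omega)]

theorem cnt_eq {n : ℕ} {h : ℕ → ℕ} (s j : ℕ) (hj : j ≤ n)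
    (h1 : ∀ i, i < j → s < h i) (h2 : ∀ i, j ≤ i → i < n → h i ≤ s) :
    ((Finset.range n).filter (fun j => h j ≤ s)).card = n - j := by
  have : (Finset.range n).filter (fun j => h j ≤ s) = Finset.Ico j n := by
    ext i
    simp only [Finset.mem_filter, Finset.mem_range, Finset.mem_Ico]
    constructor
    · rintro ⟨a, b⟩
      refine ⟨?_, a⟩
      by_contra hc
      have := h1 i (by omega)
      omega
    · rintro ⟨a, b⟩
      exact ⟨b, h2 i a b⟩
  rw [this, Nat.card_Ico]

theorem posP_small_lt {n : ℕ} {h : ℕ → ℕ} (hg : GoodH n h) (s j : ℕ) (hs : s < n) (hj : j < n) :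
    (s < h j → posP n h s < posP n h (n + j)) ∧ (h j ≤ s → posP n h (n + j) < posP n h s) := by
  unfold posP
  rw [if_pos hs, if_neg (by omega)]
  have e : n + j - n = j := by omega
  rw [e]
  constructor
  · intro hh
    have : (Finset.range n).filter (fun j => h j ≤ s) ⊆ Finset.Ico (j+1) n := by
      intro i
      simp only [Finset.mem_filter, Finset.mem_range, Finset.mem_Ico]
      rintro ⟨a, b⟩
      refine ⟨?_, a⟩
      by_contra hc
      have := hg.2 i j (by omega) hj
      omega
    have := Finset.card_le_card this
    rw [Nat.card_Ico] at this
    omega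
  · intro hh
    have : Finset.Ico j n ⊆ (Finset.range n).filter (fun j => h j ≤ s) := by
      intro i
      simp only [Finset.mem_filter, Finset.mem_range, Finset.mem_Ico]
      rintro ⟨a, b⟩
      have := hg.2 j i a b
      exact ⟨b, by omega⟩
    have := Finset.card_le_card this
    rw [Nat.card_Ico] at this
    omega

theorem posP_small_mono {n : ℕ} {h : ℕ → ℕ} (s t : ℕ) (hst : s < t) (ht : t < n) :
    posP n h s < posP n h t := by
  unfold posP
  rw [if_pos (by omega), if_pos ht]
  have : (Finset.range n).filter (fun j => h j ≤ s) ⊆ (Finset.range n).filter (fun j => h j ≤ t) := by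
    intro i
    simp only [Finset.mem_filter, Finset.mem_range]
    rintro ⟨a, b⟩
    exact ⟨a, by omega⟩
  have := Finset.card_le_card this
  omega

theorem posP_big_anti {n : ℕ} {h : ℕ → ℕ} (hg : GoodH n h) (s t : ℕ) (hs : n ≤ s) (hst : s < t)
    (ht : t < 2 * n) : posP n h t < posP n h s := by
  unfold posP
  rw [if_neg (by omega), if_neg (by omega)]
  have := hg.2 (s - n) (t - n) (by omega) (by omega)
  omega

theorem posP_ne {n : ℕ} {h : ℕ → ℕ} (hg : GoodH n h) (x y : ℕ) (hxy : x < y) (hy : y < 2 * n) :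
    posP n h x ≠ posP n h y := by
  by_cases h1 : y < n
  · exact (posP_small_mono x y hxy h1).ne
  by_cases h2 : n ≤ x
  · exact (posP_big_anti hg x y h2 hxy hy).ne'
  · have := posP_small_lt hg x (y - n) (by omega) (by omega)
    rw [show n + (y - n) = y by omega] at this
    rcases lt_or_ge x (h (y - n)) with h | h
    · exact (this.1 h).ne
    · exact (this.2 h).ne'

theorem posP_inj {n : ℕ} {h : ℕ → ℕ} (hg : GoodH n h) (x y : ℕ) (hx : x < 2 * n) (hy : y < 2 * n)
    (e : posP n h x = posP n h y) : x = y := by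
  rcases lt_trichotomy x y with h | h | h
  · exact absurd e (posP_ne hg x y h hy)
  · exact h
  · exact absurd e.symm (posP_ne hg y x h hx)

theorem posP_lt {n : ℕ} {h : ℕ → ℕ} (hg : GoodH n h) (x : ℕ) (hx : x < 2 * n) :
    posP n h x < 2 * n := by
  unfold posP
  split_ifs with hc
  · have := Finset.card_filter_le (Finset.range n) (fun j => h j ≤ x)
    rw [Finset.card_range] at this
    omega
  · have := hg.1 (x - n) (by omega)
    omega

theorem posP_zero {n : ℕ} {h : ℕ → ℕ} (hn : 0 < n) (hg : GoodH n h) : posP n h 0 = 0 := by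
  unfold posP
  rw [if_pos hn, cnt_eq 0 n le_rfl]
  · omega
  · intro i hi
    have := hg.1 i hi
    omega
  · intro i hi; omega

theorem mem_J {n : ℕ} (A : Matrix (Fin n) (Fin n) ℝ) (hD : IsDyckMatrix A) (j : ℕ) (hj : j + 1 < n) :
    n + 1 + (j + 1) ∈ JSet A ↔ hA A (j + 1) ≠ hA A j := by
  have hg := hA_good A hD
  unfold JSet
  simp only [Set.mem_setOf_eq]
  have e : n + 1 + (j + 1) - 1 = n + 1 + j := by omega
  rw [e]
  constructor
  · rintro ⟨_, _, h⟩ hc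
    apply h
    ext r
    rw [colB_big A _ hj, colB_big A _ (by omega : j < n), A_eq A hD, A_eq A hD]
    simp only [hc]
  · intro h
    refine ⟨by omega, by omega, ?_⟩
    intro hc
    apply h
    have := hg.2 j (j+1) (by omega) hj
    have h1 := (hg.1 j (by omega))
    by_contra hne
    have e1 := congrFun hc ⟨hA A j - 1, by omega⟩
    rw [colB_big A _ hj, colB_big A _ (by omega : j < n), A_eq A hD, A_eq A hD] at e1
    simp only at e1
    rw [if_neg (by omega), if_pos (by omega)] at e1
    rw [mul_zero, mul_one] at e1
    exact pow_ne_zero _ (by norm_num : (-1 : ℝ) ≠ 0) e1.symm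

theorem omega_col {n : ℕ} (A : Matrix (Fin n) (Fin n) ℝ) (x : ℕ) (hx : n < x) :
    omegaB A x = hA A (x - n - 1) := by
  unfold hA
  congr 1
  omega

theorem step {n : ℕ} (hn : 0 < n) (A : Matrix (Fin n) (Fin n) ℝ) (hD : IsDyckMatrix A) (y : ℕ)
    (hy : y < 2 * n) : ∃ z, z < 2 * n ∧ piA A (y + 1) = z + 1 ∧
      ((y = 0 ∧ posP n (hA A) z + 1 = 2 * n) ∨ posP n (hA A) z + 1 = posP n (hA A) y) := by
  classical
  have hg := hA_good A hD
  have g0 := hg.1 0 hn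
  -- dropping from a last column
  have drop : ∀ j, j < n → (j + 1 < n → hA A (j+1) ≠ hA A j) →
      posP n (hA A) (hA A j - 1) + 1 = posP n (hA A) (n + j) := by
    intro j hj hne
    have g1 := hg.1 j hj
    unfold posP
    rw [if_pos (by omega), if_neg (by omega), cnt_eq _ (j+1) (by omega)]
    · rw [show n + j - n = j by omega]
      omega
    · intro i hi
      have := hg.2 i j (by omega) hj
      omega
    · intro i hi hi2
      have := hg.2 (j+1) i hi hi2
      have := hg.2 j (j+1) (by omega) (by omega)
      have := hne (by omega)
      omega
  by_cases h0 : y = 0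
  · subst h0
    refine ⟨n, by omega, by simp [piA], Or.inl ⟨rfl, ?_⟩⟩
    unfold posP
    rw [if_neg (by omega), Nat.sub_self]
    omega
  by_cases h1 : y < n
  · have e : piA A (y + 1) =
      (if h : ∃ j, j ∈ JSet A ∧ omegaB A j = y then h.choose else y) := by
      unfold piA
      rw [if_neg (by omega), if_pos (by omega)]
      simp only [Nat.add_sub_cancel]
    by_cases hex : ∃ j, j ∈ JSet A ∧ omegaB A j = y
    · rw [dif_pos hex] at e
      obtain ⟨hJ, ho⟩ := hex.choose_spec
      rw [← e] at hJ ho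
      generalize piA A (y+1) = w at hJ ho
      have hb : n + 1 ≤ w ∧ w ≤ 2 * n := ⟨hJ.1, hJ.2.1⟩
      rw [omega_col A w (by omega)] at ho
      obtain ⟨j, rfl⟩ : ∃ j, w = n + 1 + j := ⟨w - (n+1), by omega⟩
      rw [show n + 1 + j - n - 1 = j by omega] at ho
      have hj : j ≠ 0 := by rintro rfl; omega
      obtain ⟨i, rfl⟩ : ∃ i, j = i + 1 := ⟨j - 1, by omega⟩
      rw [mem_J A hD i (by omega)] at hJ
      refine ⟨n + (i + 1), by omega, by omega, Or.inr ?_⟩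
      unfold posP
      rw [if_neg (by omega), if_pos h1, cnt_eq y (i+1) (by omega)]
      · rw [show n + (i+1) - n = i + 1 by omega]
        omega
      · intro k hk
        have := hg.2 k i (by omega) (by omega)
        have := hg.2 i (i+1) (by omega) (by omega)
        omega
      · intro k hk hk2
        have := hg.2 (i+1) k (by omega) (by omega)
        omega
    · rw [dif_neg hex] at e
      refine ⟨y - 1, by omega, by omega, Or.inr ?_⟩
      have key : ∀ j, j < n → hA A j ≠ y := by
        intro j
        induction j with
        | zero => intro _; omega
        | succ j ih =>
          intro hj hc
          have := ih (by omega)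
          apply hex
          refine ⟨n + 1 + (j+1), ?_, ?_⟩
          · rw [mem_J A hD j hj]; omega
          · exact hc
      unfold posP
      rw [if_pos (by omega), if_pos h1]
      have : (Finset.range n).filter (fun j => hA A j ≤ y - 1) =
          (Finset.range n).filter (fun j => hA A j ≤ y) := by
        apply Finset.filter_congr
        intro j hj
        have := key j (Finset.mem_range.1 hj)
        omega
      rw [this]
      omega
  obtain ⟨j, rfl⟩ : ∃ j, y = n + j := ⟨y - n, by omega⟩
  have g1 := hg.1 j (by omega)
  by_cases h2 : n + j + 1 < 2 * n
  · have e : piA A (n + j + 1) =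
      (if n + j + 1 + 1 ∈ JSet A then omegaB A (n + j + 1) else n + j + 1 + 1) := by
      unfold piA
      rw [if_neg (by omega), if_neg (by omega), if_pos (by omega)]
    have m := mem_J A hD j (by omega)
    rw [show n + 1 + (j + 1) = n + j + 1 + 1 by omega] at m
    split_ifs at e with hJ
    · rw [omega_col A _ (by omega), show n + j + 1 - n - 1 = j by omega] at e
      refine ⟨hA A j - 1, by omega, by omega, Or.inr (drop j (by omega) fun _ => m.1 hJ)⟩
    · refine ⟨n + j + 1, by omega, by omega, Or.inr ?_⟩
      rw [m, not_not] at hJ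
      unfold posP
      rw [if_neg (by omega), if_neg (by omega), show n + j + 1 - n = j + 1 by omega,
        show n + j - n = j by omega]
      omega
  · have e : piA A (n + j + 1) = omegaB A (2 * n) := by
      unfold piA
      rw [if_neg (by omega), if_neg (by omega), if_neg (by omega)]
    rw [omega_col A _ (by omega), show 2 * n - n - 1 = j by omega] at e
    exact ⟨hA A j - 1, by omega, by omega, Or.inr (drop j (by omega) fun _ => by omega)⟩

theorem pow_top {m : ℕ} (hm : 0 < m) (σ : Equiv.Perm (Fin m)) (o : Fin m)
    (hs : ∀ x : Fin m, ∃ k, k < m ∧ (σ ^ k) o = x) :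
    (∀ k l, k < m → l < m → (σ ^ k) o = (σ ^ l) o → k = l) ∧ (σ ^ m) o = o := by
  have hsur : Function.Surjective (fun k : Fin m => (σ ^ (k : ℕ)) o) := by
    intro x
    obtain ⟨k, hk, e⟩ := hs x
    exact ⟨⟨k, hk⟩, e⟩
  have hinj := Finite.injective_iff_surjective.2 hsur
  have inj : ∀ k l, k < m → l < m → (σ ^ k) o = (σ ^ l) o → k = l := by
    intro k l hk hl e
    have := @hinj ⟨k, hk⟩ ⟨l, hl⟩ e
    simpa using this
  refine ⟨inj, ?_⟩
  obtain ⟨k, hk, e⟩ := hs ((σ ^ m) o)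
  rcases Nat.eq_zero_or_pos k with h0 | h0
  · subst h0; simpa using e.symm
  · obtain ⟨k, rfl⟩ : ∃ i, k = i + 1 := ⟨k - 1, by omega⟩
    obtain ⟨m, rfl⟩ : ∃ i, m = i + 1 := ⟨m - 1, by omega⟩
    rw [pow_succ', pow_succ', Equiv.Perm.mul_apply, Equiv.Perm.mul_apply] at e
    have := inj _ _ (by omega) (by omega) (σ.injective e)
    omega

theorem pos_surj {n : ℕ} (h : ℕ → ℕ) (σ : Equiv.Perm (Fin (2 * n))) (o : Fin (2 * n))
    (hp : ∀ k, k < 2 * n → posP n h ((σ ^ k) o) = k) (x : Fin (2 * n)) :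
    ∃ k, k < 2 * n ∧ (σ ^ k) o = x := by
  have hinj : Function.Injective (fun k : Fin (2 * n) => (σ ^ (k : ℕ)) o) := by
    intro a b e
    have h1 := hp a a.isLt
    have h2 := hp b b.isLt
    simp only at e
    rw [e, h2] at h1
    exact Fin.ext h1.symm
  obtain ⟨k, hk⟩ := Finite.injective_iff_surjective.1 hinj x
  exact ⟨k, k.isLt, hk⟩

theorem inv_of_pos {n : ℕ} (hn : 0 < n) (A : Matrix (Fin n) (Fin n) ℝ) (hD : IsDyckMatrix A)
    (σ : Equiv.Perm (Fin (2 * n)))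
    (hp : ∀ k, k < 2 * n → posP n (hA A) ((σ ^ k) (⟨0, by omega⟩ : Fin (2 * n))) = k)
    (x : Fin (2 * n)) : piA A ((σ x : ℕ) + 1) = (x : ℕ) + 1 := by
  have hg := hA_good A hD
  have hs := pos_surj (hA A) σ _ hp
  obtain ⟨k, hk, rfl⟩ := hs x
  obtain ⟨z, hz, e, hor⟩ := step hn A hD _ (σ ((σ ^ k) (⟨0, by omega⟩ : Fin (2 * n)))).isLt
  rw [e]
  congr 1
  apply posP_inj hg z _ hz (Fin.isLt _)
  rw [hp k hk]
  rw [← Equiv.Perm.mul_apply, ← pow_succ'] at hor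
  have z0 := posP_zero hn hg
  by_cases hk2 : k + 1 < 2 * n
  · have := hp (k+1) hk2
    rcases hor with ⟨h1, h2⟩ | h1
    · rw [h1] at this; omega
    · omega
  · have t := (pow_top (by omega) σ _ hs).2
    rw [show k + 1 = 2 * n by omega, t] at hor
    simp only at hor
    omega

theorem exists_sigma {n : ℕ} (hn : 0 < n) (h : ℕ → ℕ) (hg : GoodH n h) :
    ∃ σ : Equiv.Perm (Fin (2 * n)), SatisfiesConds n hn σ ∧
      ∀ k, k < 2 * n → posP n h ((σ ^ k) (⟨0, by omega⟩ : Fin (2 * n))) = k := by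
  haveI : NeZero (2 * n) := ⟨by omega⟩
  let f : Fin (2 * n) → Fin (2 * n) := fun x => ⟨posP n h x, posP_lt hg x x.isLt⟩
  have hf : Function.Bijective f := by
    rw [← Finite.injective_iff_bijective]
    intro a b e
    exact Fin.ext (posP_inj hg _ _ a.isLt b.isLt (by simpa [f] using e))
  let e : Equiv.Perm (Fin (2 * n)) := Equiv.ofBijective f hf
  let σ : Equiv.Perm (Fin (2 * n)) := (e.trans (Equiv.addRight 1)).trans e.symm
  have hσ : ∀ x, posP n h (σ x) = (posP n h x + 1) % (2 * n) := by
    intro x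
    have : e (σ x) = e x + 1 := by simp [σ]
    have := congrArg Fin.val this
    rw [Fin.val_add] at this
    have h1 : ((1 : Fin (2 * n)) : ℕ) = 1 := by
      rw [Fin.val_one']; exact Nat.mod_eq_of_lt (by omega)
    rw [h1] at this
    exact this
  have hp : ∀ k, k < 2 * n → posP n h ((σ ^ k) (⟨0, by omega⟩ : Fin (2 * n))) = k := by
    intro k
    induction k with
    | zero => intro _; simpa using posP_zero hn hg
    | succ k ih =>
      intro hk
      rw [pow_succ', Equiv.Perm.mul_apply, hσ, ih (by omega)]
      exact Nat.mod_eq_of_lt hk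
  refine ⟨σ, ?_, hp⟩
  rintro o rfl
  have hs := pos_surj h σ _ hp
  refine ⟨hs, ?_, ?_, ?_⟩
  · intro k l hkl hl hk' hl'
    have h1 := hp k (by omega)
    have h2 := hp l hl
    generalize (σ ^ k) (⟨0, by omega⟩ : Fin (2 * n)) = a at *
    generalize (σ ^ l) (⟨0, by omega⟩ : Fin (2 * n)) = b at *
    by_contra hc
    rcases Nat.lt_or_ge b a with hab | hab
    · have := posP_small_mono (h := h) _ _ hab hk'
      omega
    · have : (a : ℕ) = b := by omega
      rw [this] at h1; omega
  · intro k l hkl hl hk' hl'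
    have h1 := hp k (by omega)
    have h2 := hp l hl
    generalize (σ ^ k) (⟨0, by omega⟩ : Fin (2 * n)) = a at *
    generalize (σ ^ l) (⟨0, by omega⟩ : Fin (2 * n)) = b at *
    by_contra hc
    rcases Nat.lt_or_ge a b with hab | hab
    · have := posP_big_anti hg _ _ hk' hab b.isLt
      omega
    · have : (a : ℕ) = b := by omega
      rw [this] at h1; omega
  · intro k hk1 hk2
    apply Finset.card_le_card_of_injOn
      (fun t => posP n h (2 * n - 1 - ((σ ^ t) (⟨0, by omega⟩ : Fin (2 * n)) : ℕ)))
    · intro t ht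
      simp only [Finset.coe_filter, Finset.mem_range, Set.mem_setOf_eq] at ht ⊢
      have h1 := hp t (by omega)
      generalize (σ ^ t) (⟨0, by omega⟩ : Fin (2 * n)) = a at *
      have ha := a.isLt
      have hl := posP_lt hg (2 * n - 1 - a) (by omega)
      have g := hg.1 (a - n) (by omega)
      have hh := (posP_small_lt hg (2 * n - 1 - a) (a - n) (by omega) (by omega)).1 (by omega)
      rw [show n + ((a : ℕ) - n) = a by omega] at hh
      refine ⟨by omega, ?_⟩
      have h3 := hp _ hl
      have := posP_inj hg _ _ (Fin.isLt _) (by omega) h3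
      omega
    · intro t ht t' ht' e
      simp only [Finset.coe_filter, Finset.mem_range, Set.mem_setOf_eq] at ht ht' e
      have := posP_inj hg _ _ (by omega) (by omega) e
      have h1 := hp t (by omega)
      have h2 := hp t' (by omega)
      have : ((σ ^ t) (⟨0, by omega⟩ : Fin (2 * n)) : ℕ) = (σ ^ t') (⟨0, by omega⟩ : Fin (2 * n)) := by
        omega
      rw [this] at h1
      omega

theorem exists_h {n : ℕ} (hn : 0 < n) (σ : Equiv.Perm (Fin (2 * n))) (hc : SatisfiesConds n hn σ) :
    ∃ h : ℕ → ℕ, GoodH n h ∧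
      ∀ k, k < 2 * n → posP n h ((σ ^ k) (⟨0, by omega⟩ : Fin (2 * n))) = k := by
  obtain ⟨hs, hmono, hanti, hcnt⟩ := hc ⟨0, by omega⟩ rfl
  have inj := (pow_top (by omega) σ _ hs).1
  generalize ho : (⟨0, by omega⟩ : Fin (2 * n)) = o at *
  have hs' : ∀ x : ℕ, ∃ k, x < 2 * n → k < 2 * n ∧ ((σ ^ k) o : ℕ) = x := by
    intro x
    by_cases hx : x < 2 * n
    · obtain ⟨k, hk, e⟩ := hs ⟨x, hx⟩
      exact ⟨k, fun _ => ⟨hk, by rw [e]⟩⟩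
    · exact ⟨0, fun h => absurd h hx⟩
  choose Q hQ using hs'
  have hQl : ∀ x, x < 2 * n → Q x < 2 * n := fun x hx => (hQ x hx).1
  have hQe : ∀ x, x < 2 * n → ((σ ^ (Q x)) o : ℕ) = x := fun x hx => (hQ x hx).2
  have hQk : ∀ k, k < 2 * n → Q ((σ ^ k) o) = k := by
    intro k hk
    apply inj _ _ (hQl _ (Fin.isLt _)) hk
    exact Fin.ext (hQe _ (Fin.isLt _))
  have hQinj : ∀ x y, x < 2 * n → y < 2 * n → Q x = Q y → x = y := by
    intro x y hx hy e
    rw [← hQe x hx, ← hQe y hy, e]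
  have Qmono : ∀ s t, s < t → t < n → Q s < Q t := by
    intro s t hst ht
    by_contra hcon
    have hne : Q t ≠ Q s := fun e => by have := hQinj _ _ (by omega) (by omega) e; omega
    have := hmono (Q t) (Q s) (by omega) (hQl _ (by omega))
    rw [hQe s (by omega), hQe t (by omega)] at this
    omega
  have Qanti : ∀ s t, n ≤ s → s < t → t < 2 * n → Q t < Q s := by
    intro s t hs' hst ht
    by_contra hcon
    have hne : Q t ≠ Q s := fun e => by have := hQinj _ _ (by omega) (by omega) e; omega
    have := hanti (Q s) (Q t) (by omega) (hQl _ (by omega))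
    rw [hQe s (by omega), hQe t (by omega)] at this
    omega
  have Qcard : ∀ x, x < 2 * n → Q x = ((Finset.range n).filter (fun s => Q s < Q x)).card +
      ((Finset.range n).filter (fun j => Q (n + j) < Q x)).card := by
    intro x hx
    have hd : Finset.range (Q x) = ((Finset.range n).filter (fun s => Q s < Q x)).image Q ∪
      ((Finset.range n).filter (fun j => Q (n + j) < Q x)).image (fun j => Q (n + j)) := by
      ext k
      simp only [Finset.mem_union, Finset.mem_image, Finset.mem_filter, Finset.mem_range]
      constructor
      · intro hk
        have hl := hQl x hx
        have e := hQk k (by omega)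
        have := ((σ ^ k) o).isLt
        by_cases hlt : ((σ ^ k) o : ℕ) < n
        · exact Or.inl ⟨_, ⟨hlt, by rw [e]; exact hk⟩, e⟩
        · refine Or.inr ⟨((σ ^ k) o : ℕ) - n, ⟨by omega, ?_⟩, ?_⟩
          · rw [show n + (((σ ^ k) o : ℕ) - n) = (σ ^ k) o by omega, e]; exact hk
          · rw [show n + (((σ ^ k) o : ℕ) - n) = (σ ^ k) o by omega, e]
      · rintro (⟨a, ⟨_, h⟩, rfl⟩ | ⟨a, ⟨_, h⟩, rfl⟩) <;> exact h
    conv_lhs => rw [← Finset.card_range (Q x), hd]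
    rw [Finset.card_union_of_disjoint, Finset.card_image_of_injOn, Finset.card_image_of_injOn]
    · intro a ha b hb e
      simp only [Finset.coe_filter, Finset.mem_range, Set.mem_setOf_eq] at ha hb e
      have := hQinj _ _ (by omega) (by omega) e
      omega
    · intro a ha b hb e
      simp only [Finset.coe_filter, Finset.mem_range, Set.mem_setOf_eq] at ha hb e
      exact hQinj _ _ (by omega) (by omega) e
    · rw [Finset.disjoint_left]
      intro k h1 h2
      simp only [Finset.mem_image, Finset.mem_filter, Finset.mem_range] at h1 h2
      obtain ⟨a, ⟨ha, _⟩, rfl⟩ := h1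
      obtain ⟨b, ⟨hb, _⟩, e⟩ := h2
      have := hQinj _ _ (by omega) (by omega) e
      omega
  let h : ℕ → ℕ := fun j => ((Finset.range n).filter (fun s => Q s < Q (n + j))).card
  have hh : ∀ j, h j = ((Finset.range n).filter (fun s => Q s < Q (n + j))).card := fun j => rfl
  have hlt : ∀ s j, s < n → j < n → (Q s < Q (n + j) ↔ s < h j) := by
    intro s j hs' hj
    refine lower_nat (fun s => Q s < Q (n + j)) ?_ s hs'
    intro a b hab hb hlt
    rcases Nat.eq_or_lt_of_le hab with rfl | hab
    · exact hlt
    · exact (Qmono a b hab hb).trans hlt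
  have hpq : ∀ x, x < 2 * n → posP n h x = Q x := by
    intro x hx
    rw [Qcard x hx]
    unfold posP
    split_ifs with hxn
    · congr 1
      · have : (Finset.range n).filter (fun s => Q s < Q x) = Finset.range x := by
          ext s
          simp only [Finset.mem_filter, Finset.mem_range]
          constructor
          · rintro ⟨a, b⟩
            by_contra hcon
            rcases Nat.eq_or_lt_of_le (not_lt.1 hcon) with rfl | h'
            · omega
            · have := Qmono x s h' a
              omega
          · intro a
            exact ⟨by omega, Qmono s x a hxn⟩
        rw [this, Finset.card_range]
      · congr 1
        apply Finset.filter_congr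
        intro j hj
        rw [Finset.mem_range] at hj
        have h1 := hlt x j hxn hj
        have h2 : Q x ≠ Q (n + j) := fun e => by
          have := hQinj _ _ (by omega) (by omega) e; omega
        omega
    · have e : n + (x - n) = x := by omega
      rw [hh, e]
      congr 1
      have : (Finset.range n).filter (fun j => Q (n + j) < Q x) = Finset.Ico (x - n + 1) n := by
        ext j
        simp only [Finset.mem_filter, Finset.mem_range, Finset.mem_Ico]
        constructor
        · rintro ⟨a, b⟩
          refine ⟨?_, a⟩
          by_contra hcon
          rcases Nat.eq_or_lt_of_le (show n + j ≤ x by omega) with h' | h'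
          · rw [h'] at b; omega
          · have := Qanti (n + j) x (by omega) h' hx
            omega
        · rintro ⟨a, b⟩
          exact ⟨b, Qanti x (n + j) (by omega) (by omega) (by omega)⟩
      rw [this, Nat.card_Ico]
      omega
  refine ⟨h, ⟨?_, ?_⟩, ?_⟩
  · intro j hj
    constructor
    · have hl := hQl (n + j) (by omega)
      have hpos : 1 ≤ Q (n + j) := by
        by_contra hcon
        have h0 : Q (n + j) = 0 := by omega
        have := hQe (n + j) (by omega)
        rw [h0, ← ho] at this
        simp at this
        omega
      have hk := hcnt (Q (n + j)) hpos (by omega)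
      have c1 : (Finset.Ico j n).card ≤ ((Finset.range (Q (n + j) + 1)).filter
          (fun t => n ≤ ((σ ^ t) o : ℕ))).card := by
        apply Finset.card_le_card_of_injOn (fun i => Q (n + i))
        · intro i hi
          simp only [Finset.coe_Ico, Set.mem_Ico] at hi
          simp only [Finset.coe_filter, Finset.mem_range, Set.mem_setOf_eq]
          rw [hQe _ (by omega)]
          refine ⟨?_, by omega⟩
          rcases Nat.eq_or_lt_of_le hi.1 with rfl | h'
          · omega
          · have := Qanti (n + j) (n + i) (by omega) (by omega) (by omega)
            omega
        · intro a ha b hb e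
          simp only [Finset.coe_Ico, Set.mem_Ico] at ha hb e
          have := hQinj _ _ (by omega) (by omega) e
          omega
      have c2 : ((Finset.range (Q (n + j) + 1)).filter
          (fun t => ((σ ^ t) o : ℕ) < n)).card ≤ h j := by
        rw [hh]
        apply Finset.card_le_card_of_injOn (fun t => ((σ ^ t) o : ℕ))
        · intro t ht
          simp only [Finset.coe_filter, Finset.mem_range, Set.mem_setOf_eq] at ht ⊢
          refine ⟨ht.2, ?_⟩
          rw [hQk t (by omega)]
          have : t ≠ Q (n + j) := by
            rintro rfl
            rw [hQe _ (by omega)] at ht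
            omega
          omega
        · intro a ha b hb e
          simp only [Finset.coe_filter, Finset.mem_range, Set.mem_setOf_eq] at ha hb e
          exact inj _ _ (by omega) (by omega) (Fin.ext e)
      rw [Nat.card_Ico] at c1
      omega
    · rw [hh]
      exact (Finset.card_filter_le _ _).trans (by simp)
  · intro i j hij hj
    rw [hh, hh]
    apply Finset.card_le_card
    intro s
    simp only [Finset.mem_filter, Finset.mem_range]
    rintro ⟨a, b⟩
    refine ⟨a, ?_⟩
    rcases Nat.eq_or_lt_of_le hij with rfl | h'
    · exact b
    · have := Qanti (n + i) (n + j) (by omega) (by omega) (by omega)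
      omega
  · intro k hk
    rw [hpq _ (Fin.isLt _), hQk k hk]

theorem pos_of_inv {n : ℕ} (hn : 0 < n) (A : Matrix (Fin n) (Fin n) ℝ) (hD : IsDyckMatrix A)
    (σ : Equiv.Perm (Fin (2 * n))) (hi : ∀ x : Fin (2 * n), piA A ((σ x : ℕ) + 1) = (x : ℕ) + 1) :
    ∀ k, k < 2 * n → posP n (hA A) ((σ ^ k) (⟨0, by omega⟩ : Fin (2 * n))) = k := by
  obtain ⟨τ, _, hp⟩ := exists_sigma hn (hA A) (hA_good A hD)
  have hτ := inv_of_pos hn A hD τ hp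
  have : σ = τ := by
    ext x
    have h1 := hi x
    have h2 := hτ (τ.symm (σ x))
    rw [Equiv.apply_symm_apply, h1] at h2
    have : x = τ.symm (σ x) := Fin.ext (by omega)
    conv_rhs => rw [this, Equiv.apply_symm_apply]
  rw [this]
  exact hp

/-- The map `A ↦ π_A⁻¹` is a bijection from `n × n` Dyck matrices onto permutations of
`{1,…,2n}` satisfying conditions (1)–(2).  Here `σ` (on `Fin (2n)`, element `x` representing
`x+1`) is the inverse of `π_A` precisely when `π_A(σ(x)) = x` for all `x`. -/
theorem dyckMatrix_to_inverse_piA_bijective (n : ℕ) (hn : 0 < n) :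
    (∀ A : Matrix (Fin n) (Fin n) ℝ, IsDyckMatrix A →
      ∃ σ : Equiv.Perm (Fin (2 * n)), SatisfiesConds n hn σ ∧
        ∀ x : Fin (2 * n), piA A ((σ x : ℕ) + 1) = (x : ℕ) + 1) ∧
    (∀ σ : Equiv.Perm (Fin (2 * n)), SatisfiesConds n hn σ →
      ∃! A : Matrix (Fin n) (Fin n) ℝ, IsDyckMatrix A ∧
        ∀ x : Fin (2 * n), piA A ((σ x : ℕ) + 1) = (x : ℕ) + 1) := by
  constructor
  · intro A hD
    obtain ⟨σ, hc, hp⟩ := exists_sigma hn (hA A) (hA_good A hD)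
    exact ⟨σ, hc, inv_of_pos hn A hD σ hp⟩
  · intro σ hc
    obtain ⟨h, hg, hp⟩ := exists_h hn σ hc
    obtain ⟨A, hD, hh⟩ := exists_A h hg
    have hpA : ∀ k, k < 2 * n → posP n (hA A) ((σ ^ k) (⟨0, by omega⟩ : Fin (2 * n))) = k := by
      intro k hk
      rw [posP_congr hh _ (Fin.isLt _)]
      exact hp k hk
    refine ⟨A, ⟨hD, inv_of_pos hn A hD σ hpA⟩, ?_⟩
    rintro A' ⟨hD', hi'⟩
    have hp' := pos_of_inv hn A' hD' σ hi'
    have hs := pos_surj _ σ _ hpA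
    have key : ∀ j, j < n → hA A' j = hA A j := by
      intro j hj
      obtain ⟨k, hk, e⟩ := hs ⟨n + j, by omega⟩
      have h1 := hpA k hk
      have h2 := hp' k hk
      rw [e] at h1 h2
      unfold posP at h1 h2
      simp only at h1 h2
      rw [if_neg (by omega), show n + j - n = j by omega] at h1 h2
      omega
    ext i j
    rw [A_eq A hD, A_eq A' hD', key j j.isLt]
end

section
/- Let π be a fixed-point-free permutation of {1,…,m}. For each i ∈ {1,…,m}, let E_i be the number of indices j ∈ {1,…,m} with j <_i π(j). Then E_i does not depend on i: E_i = E_{i'} for all i, i' ∈ {1,…,m}. -/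
/-- The position of `x` in the shifted linear `i`-order on `{1,…,m}`, encoded 0-based on
`Fin m` (the element `x` represents `x+1`): `i` has position `0`, `i+1` position `1`, …
cyclically; `x <_i y` iff `shiftedPos m i x < shiftedPos m i y`. -/
def shiftedPos (m : ℕ) (i x : Fin m) : ℕ := ((x : ℕ) + m - (i : ℕ)) % m

theorem shiftedPos_eq_ite_aux (m : ℕ) (i x : Fin m) :
    shiftedPos m i x = if (i : ℕ) ≤ x then (x : ℕ) - i else (x : ℕ) + m - i := by
  have hi := i.isLt
  have hx := x.isLt
  unfold shiftedPos
  split_ifs with h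
  · rw [show (x : ℕ) + m - i = (x - i) + m by omega, Nat.add_mod_right]
    exact Nat.mod_eq_of_lt (by omega)
  · exact Nat.mod_eq_of_lt (by omega)

theorem excedance_pointwise_aux (m : ℕ) (i x y : Fin m) (h : y ≠ x) :
    m * (if shiftedPos m i x < shiftedPos m i y then 1 else 0) + shiftedPos m i x
      + shiftedPos m x y = shiftedPos m i y + m := by
  have hi := i.isLt
  have hx := x.isLt
  have hy := y.isLt
  have h' : (y : ℕ) ≠ x := fun e => h (Fin.ext e)
  simp only [shiftedPos_eq_ite_aux]
  split_ifs <;> simp only [mul_one, mul_zero] <;> omega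

theorem excedance_count_aux (m : ℕ) (σ : Equiv.Perm (Fin m)) (hσ : ∀ j, σ j ≠ j) (i : Fin m) :
    m * (Finset.univ.filter fun j : Fin m =>
          shiftedPos m i j < shiftedPos m i (σ j)).card
      + ∑ j, shiftedPos m j (σ j) = m * m := by
  have h := Finset.sum_congr (rfl : (Finset.univ : Finset (Fin m)) = Finset.univ)
    (fun j _ => excedance_pointwise_aux m i j (σ j) (hσ j))
  simp only [Finset.sum_add_distrib, ← Finset.mul_sum] at h
  rw [Equiv.sum_comp σ (fun j => shiftedPos m i j), ← Finset.card_filter] at h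
  simp only [Finset.sum_const, Finset.card_univ, Fintype.card_fin, smul_eq_mul] at h
  omega

/-- For a fixed-point-free permutation `σ` of `{1,…,m}`, the number of weak `i`-excedances
(indices `j` with `j <_i σ(j)`) does not depend on `i`. -/
theorem card_weak_excedances_indep
    (m : ℕ) (σ : Equiv.Perm (Fin m)) (hσ : ∀ j, σ j ≠ j) :
    ∀ i i' : Fin m,
      (Finset.univ.filter fun j : Fin m =>
          shiftedPos m i j < shiftedPos m i (σ j)).card =
      (Finset.univ.filter fun j : Fin m =>
          shiftedPos m i' j < shiftedPos m i' (σ j)).card := by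
  intro i i'
  have h1 := excedance_count_aux m σ hσ i
  have h2 := excedance_count_aux m σ hσ i'
  have hm : 0 < m := i.pos
  exact Nat.eq_of_mul_eq_mul_left hm (by omega)
end
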